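/- Let m ≥ 3 and let μ be a probability distribution on {0,1}^{E_m} supported exactly on Equiv_m (positive on every element of Equiv_m, zero elsewhere) which is invariant under the action of permutations of [m] on pairs. Let q = Pr_{x ∼ μ}[x_{{i,j}} = 1] (by symmetry this is the same for every pair {i,j}), and let ν be the product distribution on {0,1}^p in which each coordinate independently equals 1 with probability q. Then there exists ε₀ > 0 (depending on m and μ) such that for every ε with 0 < ε < ε₀ there exists δ > 0 such that for every p the following holds: if (f_{{i,j}})_{i<j}, with f_{{i,j}} : {0,1}^p → {0,1}, satisfy Pr_{x^(1),…,x^(p) i.i.d. ∼ μ}[the vector whose {i,j}-coordinate is f_{{i,j}}(x^(1)_{{i,j}},…,x^(p)_{{i,j}}) belongs to Equiv_m] ≥ 1 − δ, and moreover Pr_{x ∼ ν}[f_{{i,j}}(x) = 0] < 1 − ε for all i < j, then there exists a set S ⊆ [p] such that for all i < j, Pr_{x ∼ ν}[f_{{i,j}}(x) = ⋀_{s ∈ S} x_s] ≥ 1 − ε. -/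

import Mathlib

/-- The index set `E_m` of unordered pairs of distinct elements of `[m]`, encoded as
ordered pairs `(i,j)` with `i < j`. -/
abbrev PairIdx (m : ℕ) := {q : Fin m × Fin m // q.1 < q.2}

/-- Look up the coordinate of `x` at the unordered pair `{i,j}` (junk value `false`
if `i = j`). -/
def pget {m : ℕ} (x : PairIdx m → Bool) (i j : Fin m) : Bool :=
  if h : i < j then x ⟨(i, j), h⟩ else if h' : j < i then x ⟨(j, i), h'⟩ else false

/-- The predicate `Equiv_m`: the vector encodes a relation closed under transitivity. -/
def IsEquivVec {m : ℕ} (x : PairIdx m → Bool) : Prop :=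
  ∀ i j k : Fin m, i ≠ j → j ≠ k → i ≠ k →
    pget x i j = true → pget x j k = true → pget x i k = true

open scoped Classical in
/-- Probability of an event for `p` i.i.d. samples from the distribution `μ`
(given by its probability mass function) on a finite type. -/
noncomputable def prodPr {α : Type*} [Fintype α] (μ : α → ℝ) (p : ℕ)
    (P : (Fin p → α) → Prop) : ℝ :=
  ∑ x : Fin p → α, if P x then ∏ k, μ (x k) else 0

open scoped Classical in
/-- Probability of an event under the product distribution on `{0,1}^p` in which each
coordinate is independently `1` with probability `q`. -/
noncomputable def nuPr (q : ℝ) (p : ℕ) (P : (Fin p → Bool) → Prop) : ℝ :=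
  ∑ y : Fin p → Bool, if P y then ∏ k, (if y k = true then q else 1 - q) else 0

/-! The law `μ` restricted to the three pairs inside a triple of points charges the vectors of
weight `0`, `1` and `3` in `{0,1}³`, and three functions `f`, `g`, `h` on these coordinates
preserve transitivity except with a small probability, the defect, that exactly two of their
values are `1`.

Only boundedly many coordinates `J` have a large smoothed influence. Off `J`, a Lindeberg
replacement, with errors controlled by small-set expansion, exchanges the law for its tilt by the
character of degree three, which has the same pairwise marginals and full support. Reverse
hypercontractivity for the tilted law then yields a fixing of `J` under which `f`, `g`, `h` all
have mean close to `1`, and small-set expansion improves this to `1 - O(defect)`. It follows that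
each restriction of `f`, `g`, `h` to a pattern on `J` is nearly constant. Transitive triples of
patterns propagate the value `1`, so the patterns on which the restriction is nearly `1` form one
common principal up-set: `f`, `g` and `h` are close to the same conjunction.

Two different conjunctions cannot both be close to a function that is not close to `0`, as
resampling one coordinate shows. Hence the conjunctions found on triples sharing a pair agree, and
they glue to a single `S` for all pairs. -/

open Finset

section MapWeight

variable {Ω Ω' : Type*} [Fintype Ω] [Fintype Ω'] [DecidableEq Ω']

/-- The pushforward of a weight function: the mass of `b` is the total mass of its fibre. -/
def mapWeight (p : Ω → Ω') (w : Ω → ℝ) (b : Ω') : ℝ :=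
  ∑ a with p a = b, w a

theorem sum_mapWeight_mul (p : Ω → Ω') (w : Ω → ℝ) (F : Ω' → ℝ) :
    ∑ b, mapWeight p w b * F b = ∑ a, w a * F (p a) := by
  simp only [mapWeight, sum_mul]
  rw [← sum_fiberwise univ p fun a => w a * F (p a)]
  refine sum_congr rfl fun b _ => sum_congr rfl fun a ha => ?_
  rw [(mem_filter.1 ha).2]

theorem mapWeight_mem_stdSimplex (p : Ω → Ω') {w : Ω → ℝ} (hw : w ∈ stdSimplex ℝ Ω) :
    mapWeight p w ∈ stdSimplex ℝ Ω' :=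
  ⟨fun _ => sum_nonneg fun a _ => hw.1 a, (sum_fiberwise univ p w).trans hw.2⟩

theorem mapWeight_mapWeight {Ω'' : Type*} [DecidableEq Ω''] (p' : Ω' → Ω'') (p : Ω → Ω')
    (w : Ω → ℝ) (c : Ω'') :
    mapWeight p' (mapWeight p w) c = mapWeight (fun a => p' (p a)) w c := by
  simpa only [mapWeight, sum_filter, mul_ite, mul_one, mul_zero] using
    sum_mapWeight_mul p w fun b => if p' b = c then 1 else 0

end MapWeight

section ProdExp

variable {ι Ω Ω' : Type*} [Fintype ι] [DecidableEq ι] [Fintype Ω] [Fintype Ω']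

/-- The expectation of `F` when the coordinates `x k` are independent with weights `w k`. The
weights may be signed: hybrid arguments use differences of laws. -/
def prodExp (w : ι → Ω → ℝ) (F : (ι → Ω) → ℝ) : ℝ :=
  ∑ x : ι → Ω, (∏ k, w k (x k)) * F x

section Linear

variable (w : ι → Ω → ℝ)

theorem prodExp_add (F G : (ι → Ω) → ℝ) :
    prodExp w (fun x => F x + G x) = prodExp w F + prodExp w G := by
  simp only [prodExp, mul_add, sum_add_distrib]

theorem prodExp_sub (F G : (ι → Ω) → ℝ) :
    prodExp w (fun x => F x - G x) = prodExp w F - prodExp w G := by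
  simp only [prodExp, mul_sub, sum_sub_distrib]

theorem prodExp_const_mul (c : ℝ) (F : (ι → Ω) → ℝ) :
    prodExp w (fun x => c * F x) = c * prodExp w F := by
  simp only [prodExp, mul_sum, mul_left_comm]

theorem prodExp_sum {κ : Type*} (s : Finset κ) (F : κ → (ι → Ω) → ℝ) :
    prodExp w (fun x => ∑ i ∈ s, F i x) = ∑ i ∈ s, prodExp w (F i) := by
  simp only [prodExp, mul_sum]
  exact sum_comm

theorem prodExp_prod (φ : ι → Ω → ℝ) :
    prodExp w (fun x => ∏ k, φ k (x k)) = ∏ k, ∑ a, w k a * φ k a := by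
  simp only [prodExp, ← prod_mul_distrib, prod_univ_sum, Fintype.piFinset_univ]

end Linear

section Probability

variable {w : ι → Ω → ℝ}

theorem prodExp_const (hw : ∀ k, ∑ a, w k a = 1) (c : ℝ) : prodExp w (fun _ => c) = c := by
  have h := prodExp_prod w fun _ _ => 1
  simp only [prod_const_one, mul_one, hw] at h
  simpa only [mul_one, h] using prodExp_const_mul w c fun _ => 1

theorem prodExp_one_sub (hw : ∀ k, ∑ a, w k a = 1) (F : (ι → Ω) → ℝ) :
    prodExp w (fun x => 1 - F x) = 1 - prodExp w F := by
  rw [prodExp_sub, prodExp_const hw]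

theorem prodExp_mono (hw : ∀ k a, 0 ≤ w k a) {F G : (ι → Ω) → ℝ} (h : ∀ x, F x ≤ G x) :
    prodExp w F ≤ prodExp w G :=
  sum_le_sum fun x _ => mul_le_mul_of_nonneg_left (h x) (prod_nonneg fun _ _ => hw _ _)

theorem prodExp_nonneg (hw : ∀ k a, 0 ≤ w k a) {F : (ι → Ω) → ℝ} (h : ∀ x, 0 ≤ F x) :
    0 ≤ prodExp w F :=
  sum_nonneg fun x _ => mul_nonneg (prod_nonneg fun _ _ => hw _ _) (h x)

theorem prodExp_le_one (hw : ∀ k, w k ∈ stdSimplex ℝ Ω) {F : (ι → Ω) → ℝ} (h : ∀ x, F x ≤ 1) :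
    prodExp w F ≤ 1 :=
  (prodExp_mono (fun k => (hw k).1) h).trans_eq (prodExp_const (fun k => (hw k).2) 1)

theorem abs_prodExp_le (hw : ∀ k a, 0 ≤ w k a) (F : (ι → Ω) → ℝ) :
    |prodExp w F| ≤ prodExp w (fun x => |F x|) := by
  refine (abs_sum_le_sum_abs _ _).trans_eq (sum_congr rfl fun x _ => ?_)
  rw [abs_mul, abs_of_nonneg (prod_nonneg fun _ _ => hw _ _)]

theorem prodExp_mul_sq_le (hw : ∀ k a, 0 ≤ w k a) (F G : (ι → Ω) → ℝ) :
    prodExp w (fun x => F x * G x) ^ 2 ≤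
      prodExp w (fun x => F x ^ 2) * prodExp w (fun x => G x ^ 2) := by
  have hprod (x : ι → Ω) : 0 ≤ ∏ k, w k (x k) := prod_nonneg fun _ _ => hw _ _
  exact sum_sq_le_sum_mul_sum_of_sq_le_mul _ (fun x _ => mul_nonneg (hprod x) (sq_nonneg _))
    (fun x _ => mul_nonneg (hprod x) (sq_nonneg _)) (fun x _ => le_of_eq (by ring))

theorem sq_prodExp_le (hw : ∀ k, w k ∈ stdSimplex ℝ Ω) (F : (ι → Ω) → ℝ) :
    prodExp w F ^ 2 ≤ prodExp w (fun x => F x ^ 2) := by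
  simpa only [mul_one, one_pow, prodExp_const fun k => (hw k).2] using
    prodExp_mul_sq_le (fun k => (hw k).1) F fun _ => 1

theorem exists_pos_of_prodExp_pos (hw : ∀ k a, 0 ≤ w k a) {F : (ι → Ω) → ℝ}
    (h : 0 < prodExp w F) : ∃ x, (∀ k, 0 < w k (x k)) ∧ 0 < F x := by
  obtain ⟨x, -, hx⟩ := exists_lt_of_sum_lt (s := univ) (f := fun _ => (0 : ℝ))
    (by simpa [prodExp] using h)
  have hprod : 0 < ∏ k, w k (x k) :=
    (prod_nonneg fun _ _ => hw _ _).lt_of_ne fun h0 => by simp [← h0] at hx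
  refine ⟨x, fun k => (hw _ _).lt_of_ne fun h0 => ?_, pos_of_mul_pos_right hx hprod.le⟩
  exact hprod.ne' (prod_eq_zero (mem_univ k) h0.symm)

end Probability

section Kernel

theorem prodExp_kernel (w : ι → Ω → ℝ) (K : ι → Ω → Ω' → ℝ) (F : (ι → Ω') → ℝ) :
    prodExp w (fun x => prodExp (fun k => K k (x k)) F) =
      prodExp (fun k b => ∑ a, w k a * K k a b) F := by
  simp only [prodExp, mul_sum, prod_univ_sum, Fintype.piFinset_univ, sum_mul, prod_mul_distrib,
    ← mul_assoc]
  exact sum_comm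

theorem prodExp_mul_kernel (w : ι → Ω → ℝ) (K : ι → Ω → Ω' → ℝ) (F : (ι → Ω) → ℝ)
    (G : (ι → Ω') → ℝ) :
    prodExp w (fun x => F x * prodExp (fun k => K k (x k)) G) =
      prodExp (fun k (z : Ω × Ω') => w k z.1 * K k z.1 z.2)
        (fun z => F (fun k => (z k).1) * G (fun k => (z k).2)) := by
  simp only [prodExp, mul_sum]
  rw [← (Equiv.arrowProdEquivProdArrow ι (fun _ => Ω) (fun _ => Ω')).symm.sum_comp,
    Fintype.sum_prod_type]
  refine sum_congr rfl fun x _ => sum_congr rfl fun y _ => ?_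
  simp only [Equiv.arrowProdEquivProdArrow, Equiv.coe_fn_symm_mk, prod_mul_distrib]
  ring

theorem prodExp_mul_prodExp (w : ι → Ω → ℝ) (w' : ι → Ω' → ℝ) (F : (ι → Ω) → ℝ)
    (G : (ι → Ω') → ℝ) :
    prodExp w F * prodExp w' G =
      prodExp (fun k (z : Ω × Ω') => w k z.1 * w' k z.2)
        (fun z => F (fun k => (z k).1) * G (fun k => (z k).2)) := by
  rw [← prodExp_mul_kernel w (fun k _ => w' k), mul_comm, ← prodExp_const_mul]
  simp only [mul_comm]

theorem prodExp_map [DecidableEq Ω'] (w : ι → Ω → ℝ) (p : ι → Ω → Ω') (F : (ι → Ω') → ℝ) :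
    prodExp w (fun x => F (fun k => p k (x k))) =
      prodExp (fun k => mapWeight (p k) (w k)) F := by
  have hdirac (x : ι → Ω) : F (fun k => p k (x k)) =
      prodExp (fun k b => if p k (x k) = b then (1 : ℝ) else 0) F := by
    simp [prodExp, prod_ite_zero, ← funext_iff]
  simp only [hdirac]
  rw [prodExp_kernel w fun k a b => if p k a = b then (1 : ℝ) else 0]
  refine congrArg₂ _ (funext₂ fun k b => ?_) rfl
  simp only [mapWeight, sum_filter, mul_ite, mul_one, mul_zero]

theorem prodExp_piecewise {w₁ w₂ : ι → Ω → ℝ} (h₁ : ∀ k, ∑ a, w₁ k a = 1)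
    (h₂ : ∀ k, ∑ a, w₂ k a = 1) (J : Finset ι) (F : (ι → Ω) → ℝ) :
    prodExp (J.piecewise w₁ w₂) F =
      prodExp w₁ (fun u => prodExp w₂ (fun v => F (J.piecewise u v))) := by
  classical
  have hfubini : prodExp w₁ (fun u => prodExp w₂ (fun v => F (J.piecewise u v))) =
      prodExp (fun k (z : Ω × Ω) => w₁ k z.1 * w₂ k z.2)
        (fun z => F (fun k => if k ∈ J then (z k).1 else (z k).2)) := by
    simp only [prodExp, mul_sum]
    rw [← (Equiv.arrowProdEquivProdArrow ι (fun _ => Ω) (fun _ => Ω)).symm.sum_comp,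
      Fintype.sum_prod_type]
    refine sum_congr rfl fun u _ => sum_congr rfl fun v _ => ?_
    simp only [Equiv.arrowProdEquivProdArrow, Equiv.coe_fn_symm_mk, prod_mul_distrib, mul_assoc]
    rfl
  rw [hfubini, prodExp_map _ (fun k (z : Ω × Ω) => if k ∈ J then z.1 else z.2)]
  congr 1
  funext k b
  by_cases hk : k ∈ J <;>
    simp [hk, mapWeight, sum_filter, Fintype.sum_prod_type, ← mul_sum, ← sum_mul, h₁, h₂]

theorem prodExp_update {w : ι → Ω → ℝ} {k : ι} (hk : ∑ a, w k a = 1) (l : Ω → ℝ)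
    (F : (ι → Ω) → ℝ) :
    prodExp (Function.update w k l) F =
      ∑ a, l a * prodExp w (fun x => F (Function.update x k a)) := by
  have hinvol : Function.Involutive
      (fun z : (ι → Ω) × Ω => (Function.update z.1 k z.2, z.1 k)) := fun z => by simp
  have hprod (v : ι → Ω → ℝ) (x : ι → Ω) :
      ∏ j, v j (x j) = v k (x k) * ∏ j ∈ univ.erase k, v j (x j) :=
    (mul_prod_erase _ _ (mem_univ k)).symm
  have hcongr (x y : ι → Ω) (v v' : ι → Ω → ℝ) (h : ∀ j ≠ k, v j (x j) = v' j (y j)) :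
      ∏ j ∈ univ.erase k, v j (x j) = ∏ j ∈ univ.erase k, v' j (y j) :=
    prod_congr rfl fun j hj => h j (ne_of_mem_erase hj)
  calc prodExp (Function.update w k l) F
      = ∑ z : (ι → Ω) × Ω, l (z.1 k) * w k z.2 * (∏ j ∈ univ.erase k, w j (z.1 j)) * F z.1 := by
        rw [Fintype.sum_prod_type]
        refine sum_congr rfl fun x _ => ?_
        simp only [← sum_mul, ← mul_sum, hk, mul_one]
        rw [hprod, Function.update_self,
          hcongr x x _ w fun j hj => by rw [Function.update_of_ne hj]]
    _ = ∑ z : (ι → Ω) × Ω, l z.2 * ((∏ j, w j (z.1 j)) * F (Function.update z.1 k z.2)) := by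
        refine Fintype.sum_equiv hinvol.toPerm _ _ fun z => ?_
        simp only [hinvol.coe_toPerm, Function.update_idem, Function.update_eq_self]
        rw [hprod, Function.update_self, hcongr (Function.update z.1 k z.2) z.1 w w fun j hj => by
          rw [Function.update_of_ne hj]]
        ring
    _ = _ := by simp only [Fintype.sum_prod_type_right, prodExp, mul_sum]

theorem pow_card_mul_prodExp_piecewise_le {w : ι → Ω → ℝ} (hw : ∀ k, w k ∈ stdSimplex ℝ Ω)
    {m : ℝ} (hm : 0 ≤ m) {J : Finset ι} {u : ι → Ω} (hu : ∀ k ∈ J, m ≤ w k (u k))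
    {F : (ι → Ω) → ℝ} (hF : ∀ x, 0 ≤ F x) :
    m ^ #J * prodExp w (fun v => F (J.piecewise u v)) ≤ prodExp w F := by
  classical
  have hmass : m ^ #J ≤
      prodExp w (fun x => ∏ k, if k ∈ J → x k = u k then (1 : ℝ) else 0) := by
    rw [prodExp_prod w fun k a => if k ∈ J → a = u k then (1 : ℝ) else 0,
      ← prod_const, ← Fintype.prod_ite_mem J]
    refine prod_le_prod (fun k _ => by split_ifs <;> positivity) fun k _ => ?_
    by_cases hk : k ∈ J
    · simpa [hk] using hu k hk
    · simp [hk, (hw k).2]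
  calc m ^ #J * prodExp w (fun v => F (J.piecewise u v))
      ≤ prodExp w (fun x => ∏ k, if k ∈ J → x k = u k then (1 : ℝ) else 0) *
          prodExp w (fun v => F (J.piecewise u v)) :=
        mul_le_mul_of_nonneg_right hmass (prodExp_nonneg (fun k => (hw k).1) fun _ => hF _)
    _ = prodExp w (fun x => prodExp w fun v =>
          (∏ k, if k ∈ J → x k = u k then (1 : ℝ) else 0) * F (J.piecewise u v)) := by
        rw [mul_comm, ← prodExp_const_mul]
        refine congrArg _ (funext fun x => ?_)
        rw [prodExp_const_mul, mul_comm]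
    _ ≤ prodExp w (fun x => prodExp w fun v => F (J.piecewise x v)) := by
        refine prodExp_mono (fun k => (hw k).1) fun x =>
          prodExp_mono (fun k => (hw k).1) fun v => ?_
        by_cases hx : ∀ k, k ∈ J → x k = u k
        · rw [J.piecewise_congr hx fun _ _ => rfl, prod_eq_one fun k _ => if_pos (hx k), one_mul]
        · simpa [prod_ite_zero, hx] using hF _
    _ = prodExp w F := by
        rw [← prodExp_piecewise (fun k => (hw k).2) (fun k => (hw k).2), piecewise_same]

end Kernel

section Fin

variable {n : ℕ}

theorem prodExp_fin_zero (w : Fin 0 → Ω → ℝ) (F : (Fin 0 → Ω) → ℝ) :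
    prodExp w F = F Fin.elim0 := by
  simp [prodExp, Subsingleton.elim (default : Fin 0 → Ω) Fin.elim0]

theorem map_fin_cons {Ω Ω' : Type*} (p : Ω → Ω') (a : Ω) (x : Fin n → Ω) :
    (fun k => p ((Fin.cons a x : Fin (n + 1) → Ω) k)) = Fin.cons (p a) fun k => p (x k) :=
  Fin.comp_cons p a x

theorem prodExp_fin_succ (w : Fin (n + 1) → Ω → ℝ) (F : (Fin (n + 1) → Ω) → ℝ) :
    prodExp w F = ∑ a, w 0 a * prodExp (fun k => w k.succ) (fun x => F (Fin.cons a x)) := by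
  simp only [prodExp, mul_sum]
  rw [← (Fin.consEquiv fun _ => Ω).sum_comp, Fintype.sum_prod_type]
  simp [Fin.consEquiv, Fin.prod_univ_succ, mul_assoc]

end Fin

end ProdExp

section ReverseHypercontractivity

section Moments

variable {Ω : Type*} [Fintype Ω] {w : Ω → ℝ} {s : ℝ}

theorem sq_sum_weight_mul_le (hw : ∀ i, 0 ≤ w i) (h1 : ∑ i, w i = 1) (x : Ω → ℝ) :
    (∑ i, w i * x i) ^ 2 ≤ ∑ i, w i * x i ^ 2 := by
  have h := sum_sq_le_sum_mul_sum_of_sq_le_mul univ (r := fun i => w i * x i)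
    (fun i _ => hw i) (fun i _ => mul_nonneg (hw i) (sq_nonneg (x i))) fun i _ => le_of_eq (by ring)
  rwa [h1, one_mul] at h

theorem mul_sum_negPart_sq_le (hw : ∀ i, 0 ≤ w i) (hs : ∀ i, s ≤ w i) (h1 : ∑ i, w i = 1)
    {x : Ω → ℝ} (hx : ∑ i, w i * x i = 0) :
    s * ∑ i, w i * (x i)⁻ ^ 2 ≤ ∑ i, w i * (x i)⁺ ^ 2 := by
  have hbalance : ∑ i, w i * (x i)⁻ = ∑ i, w i * (x i)⁺ := by
    rw [← sub_eq_zero, ← sum_sub_distrib, ← neg_eq_zero, ← sum_neg_distrib, ← hx]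
    exact sum_congr rfl fun i _ => by rw [← mul_sub, ← mul_neg, neg_sub, posPart_sub_negPart]
  have hterm (i : Ω) : s * (x i)⁻ ≤ ∑ j, w j * (x j)⁻ :=
    (mul_le_mul_of_nonneg_right (hs i) (negPart_nonneg _)).trans
      (single_le_sum (f := fun j => w j * (x j)⁻)
        (fun j _ => mul_nonneg (hw j) (negPart_nonneg _)) (mem_univ i))
  calc s * ∑ i, w i * (x i)⁻ ^ 2 = ∑ i, w i * (x i)⁻ * (s * (x i)⁻) := by
        rw [mul_sum]; exact sum_congr rfl fun i _ => by ring
    _ ≤ ∑ i, w i * (x i)⁻ * ∑ j, w j * (x j)⁻ := sum_le_sum fun i _ =>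
        mul_le_mul_of_nonneg_left (hterm i) (mul_nonneg (hw i) (negPart_nonneg _))
    _ = (∑ i, w i * (x i)⁺) ^ 2 := by rw [← sum_mul, hbalance, sq]
    _ ≤ _ := sq_sum_weight_mul_le hw h1 _

theorem one_add_mul_add_mul_sq_le_pow {A : ℕ} (hA : 2 ≤ A) {x : ℝ} (hx : 0 ≤ x) :
    1 + A * x + A * (A - 1) / 2 * x ^ 2 ≤ (1 + x) ^ A := by
  induction A, hA using Nat.le_induction with
  | base => norm_num; nlinarith
  | succ k hk ih =>
    have hk1 : (0 : ℝ) ≤ k - 1 := by rw [sub_nonneg]; exact_mod_cast one_le_two.trans hk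
    have hmul := mul_le_mul_of_nonneg_right ih (by positivity : 0 ≤ 1 + x)
    have hcube : 0 ≤ x ^ 3 * (k * (k - 1) / 2 : ℝ) := by positivity
    rw [pow_succ (1 + x)]
    push_cast
    linarith

theorem one_add_mul_add_mul_posPart_sq_le_pow {A : ℕ} (hA : 2 ≤ A) {x : ℝ} (hx : 0 ≤ 1 + x) :
    1 + A * x + A * (A - 1) / 2 * x⁺ ^ 2 ≤ (1 + x) ^ A := by
  rcases le_total 0 x with h | h
  · rw [posPart_of_nonneg h]
    exact one_add_mul_add_mul_sq_le_pow hA h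
  · rw [posPart_of_nonpos h]
    simpa using one_add_mul_le_pow (by linarith) A

theorem one_add_mul_variance_le_sum_pow {A : ℕ} (hA : 2 ≤ A) (hs0 : 0 < s) (hs : ∀ i, s ≤ w i)
    (h1 : ∑ i, w i = 1) {x : Ω → ℝ} (hx : ∀ i, 0 ≤ x i) (hmean : ∑ i, w i * x i = 1) :
    1 + A * (A - 1) / 2 * (s / (1 + s)) * ∑ i, w i * (x i - 1) ^ 2 ≤ ∑ i, w i * x i ^ A := by
  have hw (i : Ω) : 0 ≤ w i := hs0.le.trans (hs i)
  have hcentred : ∑ i, w i * (x i - 1) = 0 := by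
    simp only [mul_sub, mul_one, sum_sub_distrib, hmean, h1, sub_self]
  have hsplit : ∑ i, w i * (x i - 1) ^ 2 =
      ∑ i, w i * (x i - 1)⁺ ^ 2 + ∑ i, w i * (x i - 1)⁻ ^ 2 := by
    rw [← sum_add_distrib]
    refine sum_congr rfl fun i _ => ?_
    rcases le_total 0 (x i - 1) with h | h
    · rw [posPart_of_nonneg h, negPart_of_nonneg h]; ring
    · rw [posPart_of_nonpos h, negPart_of_nonpos h]; ring
  have hvar : s / (1 + s) * ∑ i, w i * (x i - 1) ^ 2 ≤ ∑ i, w i * (x i - 1)⁺ ^ 2 := by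
    rw [div_mul_eq_mul_div, div_le_iff₀ (by positivity), hsplit]
    linarith [mul_sum_negPart_sq_le hw hs h1 hcentred]
  have hA1 : (0 : ℝ) ≤ A - 1 := by rw [sub_nonneg]; exact_mod_cast one_le_two.trans hA
  calc 1 + A * (A - 1) / 2 * (s / (1 + s)) * ∑ i, w i * (x i - 1) ^ 2
      ≤ 1 + A * (A - 1) / 2 * ∑ i, w i * (x i - 1)⁺ ^ 2 := by
        rw [mul_assoc]; gcongr
    _ = ∑ i, w i * (1 + A * (x i - 1) + A * (A - 1) / 2 * (x i - 1)⁺ ^ 2) := by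
        have hexpand (i : Ω) : w i * (1 + A * (x i - 1) + A * (A - 1) / 2 * (x i - 1)⁺ ^ 2) =
            w i + A * (w i * (x i - 1)) + A * (A - 1) / 2 * (w i * (x i - 1)⁺ ^ 2) := by ring
        simp only [hexpand, sum_add_distrib, ← mul_sum, h1, hcentred, mul_zero, add_zero]
    _ ≤ ∑ i, w i * x i ^ A := by
        refine sum_le_sum fun i _ => mul_le_mul_of_nonneg_left ?_ (hw i)
        simpa using one_add_mul_add_mul_posPart_sq_le_pow hA (x := x i - 1) (by simpa using hx i)

end Moments

section Triple

variable {Ω₁ Ω₂ Ω₃ : Type*} [Fintype Ω₁] [Fintype Ω₂] [Fintype Ω₃]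

/-- A weight `l` on triples is reverse hypercontractive with exponent `A` when the product of the
means of three nonnegative functions of the three coordinates is bounded by the `L^{1/A}`-quasinorm
of their product; replacing each function by its `A`-th power keeps all exponents natural. -/
def RevHypercontractive (A : ℕ) (l : Ω₁ × Ω₂ × Ω₃ → ℝ) : Prop :=
  ∀ (a : Ω₁ → ℝ) (b : Ω₂ → ℝ) (c : Ω₃ → ℝ), (∀ i, 0 ≤ a i) → (∀ i, 0 ≤ b i) → (∀ i, 0 ≤ c i) →
    ((∑ i, l i * a i.1) * (∑ i, l i * b i.2.1) * ∑ i, l i * c i.2.2) ^ A ≤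
      ∑ i, l i * (a i.1 * b i.2.1 * c i.2.2) ^ A

theorem sub_mul_sq_le_mul_mul_sub_one {M x y z : ℝ} (hz : 0 ≤ z) (hzM : z ≤ M) :
    (x - 1) + (y - 1) + (z - 1) - (1 + M) * ((x - 1) ^ 2 + (y - 1) ^ 2 + (z - 1) ^ 2) ≤
      x * y * z - 1 := by
  have hcross : -(M / 2 * ((x - 1) ^ 2 + (y - 1) ^ 2)) ≤ (x - 1) * (y - 1) * z := by
    have hsq : 0 ≤ z * ((x - 1) + (y - 1)) ^ 2 := by positivity
    have hbound : z * ((x - 1) ^ 2 + (y - 1) ^ 2) ≤ M * ((x - 1) ^ 2 + (y - 1) ^ 2) := by gcongr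
    linarith
  have hM : 0 ≤ M := hz.trans hzM
  have hx : 0 ≤ M * (x - 1) ^ 2 := by positivity
  have hy : 0 ≤ M * (y - 1) ^ 2 := by positivity
  have hz : 0 ≤ M * (z - 1) ^ 2 := by positivity
  linarith [sq_nonneg ((x - 1) + (z - 1)), sq_nonneg ((y - 1) + (z - 1)), sq_nonneg (x - 1),
    sq_nonneg (y - 1)]

-- The part of `t ^ A` above its tangent at `1` is nonnegative, so it may be kept with the smaller
-- weight `t`; this is what decouples the three variables.
theorem mul_tangent_add_mul_excess_le (A : ℕ) {M x y z l t : ℝ} (hx : 0 ≤ x) (hy : 0 ≤ y)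
    (hz : 0 ≤ z) (hzM : z ≤ M) (hl : 0 ≤ l) (ht : t ≤ l) :
    l * (1 + A * ((x - 1) + (y - 1) + (z - 1)
        - (1 + M) * ((x - 1) ^ 2 + (y - 1) ^ 2 + (z - 1) ^ 2)))
      + t * ((x * y * z) ^ A - (1 + A * (x * y * z - 1))) ≤ l * (x * y * z) ^ A := by
  have hexcess : 0 ≤ (x * y * z) ^ A - (1 + A * (x * y * z - 1)) := by
    have hxyz : 0 ≤ x * y * z := by positivity
    have := one_add_mul_le_pow (a := x * y * z - 1) (by linarith) A
    rw [add_sub_cancel] at this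
    linarith
  have htangent : (A : ℝ) * ((x - 1) + (y - 1) + (z - 1)
      - (1 + M) * ((x - 1) ^ 2 + (y - 1) ^ 2 + (z - 1) ^ 2)) ≤ A * (x * y * z - 1) :=
    mul_le_mul_of_nonneg_left (sub_mul_sq_le_mul_mul_sub_one hz hzM) A.cast_nonneg
  linarith [mul_le_mul_of_nonneg_right ht hexcess,
    mul_le_mul_of_nonneg_left (add_le_add_right htangent 1) hl]

theorem one_add_add_add_le_mul_mul {x y z X Y Z : ℝ} (hx : 0 ≤ x) (hy : 0 ≤ y) (hz : 0 ≤ z)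
    (hX : 1 + x ≤ X) (hY : 1 + y ≤ Y) (hZ : 1 + z ≤ Z) : 1 + (x + y + z) ≤ X * Y * Z := by
  have hXY : 1 + (x + y) ≤ X * Y := by nlinarith
  nlinarith

theorem sum_mul_prod₃ (u : Ω₁ → ℝ) (v : Ω₂ → ℝ) (w : Ω₃ → ℝ) :
    ∑ i : Ω₁ × Ω₂ × Ω₃, u i.1 * v i.2.1 * w i.2.2 = (∑ i, u i) * (∑ i, v i) * ∑ i, w i := by
  simp only [Fintype.sum_prod_type, ← mul_sum, ← sum_mul]

variable {A : ℕ} {s : ℝ} {l : Ω₁ × Ω₂ × Ω₃ → ℝ}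

theorem le_inv_of_sum_weight_mul_eq_one {Ω : Type*} [Fintype Ω] {w x : Ω → ℝ} (hs0 : 0 < s)
    (hs : ∀ i, s ≤ w i) (hx : ∀ i, 0 ≤ x i) (hmean : ∑ i, w i * x i = 1) (i : Ω) :
    x i ≤ s⁻¹ := by
  rw [← one_div, le_div_iff₀' hs0, ← hmean]
  exact (mul_le_mul_of_nonneg_right (hs i) (hx i)).trans (single_le_sum
    (f := fun j => w j * x j) (fun j _ => mul_nonneg (hs0.le.trans (hs j)) (hx j)) (mem_univ i))

theorem sum_mul_excess_eq {ν₁ : Ω₁ → ℝ} {ν₂ : Ω₂ → ℝ} {ν₃ : Ω₃ → ℝ} (h₁ : ∑ i, ν₁ i = 1)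
    (h₂ : ∑ i, ν₂ i = 1) (h₃ : ∑ i, ν₃ i = 1) {a : Ω₁ → ℝ} {b : Ω₂ → ℝ} {c : Ω₃ → ℝ}
    (ha : ∑ i, ν₁ i * a i = 1) (hb : ∑ i, ν₂ i * b i = 1) (hc : ∑ i, ν₃ i * c i = 1) (A : ℕ) :
    ∑ i : Ω₁ × Ω₂ × Ω₃, ν₁ i.1 * ν₂ i.2.1 * ν₃ i.2.2 *
        ((a i.1 * b i.2.1 * c i.2.2) ^ A - (1 + A * (a i.1 * b i.2.1 * c i.2.2 - 1))) =
      (∑ i, ν₁ i * a i ^ A) * (∑ i, ν₂ i * b i ^ A) * (∑ i, ν₃ i * c i ^ A) - 1 := by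
  have hexpand (i : Ω₁ × Ω₂ × Ω₃) : ν₁ i.1 * ν₂ i.2.1 * ν₃ i.2.2 *
      ((a i.1 * b i.2.1 * c i.2.2) ^ A - (1 + A * (a i.1 * b i.2.1 * c i.2.2 - 1))) =
      (ν₁ i.1 * a i.1 ^ A) * (ν₂ i.2.1 * b i.2.1 ^ A) * (ν₃ i.2.2 * c i.2.2 ^ A)
        - (1 - A) * (ν₁ i.1 * ν₂ i.2.1 * ν₃ i.2.2)
        - A * ((ν₁ i.1 * a i.1) * (ν₂ i.2.1 * b i.2.1) * (ν₃ i.2.2 * c i.2.2)) := by ring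
  simp only [hexpand, sum_sub_distrib, ← mul_sum]
  rw [sum_mul_prod₃ (fun i => ν₁ i * a i ^ A) (fun i => ν₂ i * b i ^ A) fun i => ν₃ i * c i ^ A,
    sum_mul_prod₃ ν₁ ν₂ ν₃,
    sum_mul_prod₃ (fun i => ν₁ i * a i) (fun i => ν₂ i * b i) fun i => ν₃ i * c i,
    h₁, h₂, h₃, ha, hb, hc]
  ring

theorem sum_mul_tangent_eq (h1 : ∑ i, l i = 1) {x y z : Ω₁ × Ω₂ × Ω₃ → ℝ}
    (hx : ∑ i, l i * x i = 1) (hy : ∑ i, l i * y i = 1) (hz : ∑ i, l i * z i = 1) (A M : ℝ) :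
    ∑ i, l i * (1 + A * ((x i - 1) + (y i - 1) + (z i - 1)
        - (1 + M) * ((x i - 1) ^ 2 + (y i - 1) ^ 2 + (z i - 1) ^ 2))) =
      1 - A * (1 + M) * (∑ i, l i * (x i - 1) ^ 2 + ∑ i, l i * (y i - 1) ^ 2
        + ∑ i, l i * (z i - 1) ^ 2) := by
  have hexpand (i : Ω₁ × Ω₂ × Ω₃) : l i * (1 + A * ((x i - 1) + (y i - 1) + (z i - 1)
      - (1 + M) * ((x i - 1) ^ 2 + (y i - 1) ^ 2 + (z i - 1) ^ 2))) =
      (1 - 3 * A) * l i + A * (l i * x i + l i * y i + l i * z i)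
        - A * (1 + M) * (l i * (x i - 1) ^ 2 + l i * (y i - 1) ^ 2 + l i * (z i - 1) ^ 2) := by
    ring
  simp only [hexpand, sum_sub_distrib, sum_add_distrib, ← mul_sum, h1, hx, hy, hz]
  ring

theorem one_le_sum_mul_pow_of_mean_eq_one (hA : 2 ≤ A) (hs0 : 0 < s) (hs : ∀ i, s ≤ l i)
    (h1 : ∑ i, l i = 1) (hAs : A * (1 + s⁻¹) ≤ s * (A * (A - 1) / 2 * (s / (1 + s))))
    {a : Ω₁ → ℝ} {b : Ω₂ → ℝ} {c : Ω₃ → ℝ} (ha : ∀ i, 0 ≤ a i) (hb : ∀ i, 0 ≤ b i)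
    (hc : ∀ i, 0 ≤ c i) (ha1 : ∑ i, l i * a i.1 = 1) (hb1 : ∑ i, l i * b i.2.1 = 1)
    (hc1 : ∑ i, l i * c i.2.2 = 1) : 1 ≤ ∑ i, l i * (a i.1 * b i.2.1 * c i.2.2) ^ A := by
  classical
  have hl : l ∈ stdSimplex ℝ (Ω₁ × Ω₂ × Ω₃) := ⟨fun i => hs0.le.trans (hs i), h1⟩
  let p₁ (i : Ω₁ × Ω₂ × Ω₃) := i.1
  let p₂ (i : Ω₁ × Ω₂ × Ω₃) := i.2.1
  let p₃ (i : Ω₁ × Ω₂ × Ω₃) := i.2.2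
  have h₁ := mapWeight_mem_stdSimplex p₁ hl
  have h₂ := mapWeight_mem_stdSimplex p₂ hl
  have h₃ := mapWeight_mem_stdSimplex p₃ hl
  have hν (i : Ω₁ × Ω₂ × Ω₃) :
      s * (mapWeight p₁ l i.1 * mapWeight p₂ l i.2.1 * mapWeight p₃ l i.2.2) ≤ l i :=
    (mul_le_of_le_one_right hs0.le (mul_le_one₀ (mul_le_one₀ (mem_Icc_of_mem_stdSimplex h₁ _).2
      (h₂.1 _) (mem_Icc_of_mem_stdSimplex h₂ _).2) (h₃.1 _)
      (mem_Icc_of_mem_stdSimplex h₃ _).2)).trans (hs i)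
  have hpt := sum_le_sum fun i (_ : i ∈ univ) => mul_tangent_add_mul_excess_le A (ha i.1)
    (hb i.2.1) (hc i.2.2)
    (le_inv_of_sum_weight_mul_eq_one hs0 hs (fun i => hc i.2.2) hc1 i) (hl.1 i) (hν i)
  simp only [sum_add_distrib, mul_assoc s] at hpt
  rw [← mul_sum, sum_mul_tangent_eq h1 ha1 hb1 hc1, sum_mul_excess_eq h₁.2 h₂.2 h₃.2
    ((sum_mapWeight_mul p₁ l a).trans ha1) ((sum_mapWeight_mul p₂ l b).trans hb1)
    ((sum_mapWeight_mul p₃ l c).trans hc1), sum_mapWeight_mul p₁ l fun i => a i ^ A,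
    sum_mapWeight_mul p₂ l fun i => b i ^ A, sum_mapWeight_mul p₃ l fun i => c i ^ A] at hpt
  refine le_trans ?_ hpt
  have hA1 : (0 : ℝ) ≤ A - 1 := by rw [sub_nonneg]; exact_mod_cast one_le_two.trans hA
  have hvar (x : Ω₁ × Ω₂ × Ω₃ → ℝ) : 0 ≤ ∑ i, l i * (x i - 1) ^ 2 :=
    sum_nonneg fun i _ => mul_nonneg (hl.1 i) (sq_nonneg _)
  have hB : 0 ≤ A * (A - 1) / 2 * (s / (1 + s)) := by positivity
  have hmoments := mul_le_mul_of_nonneg_left (one_add_add_add_le_mul_mul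
    (mul_nonneg hB (hvar _)) (mul_nonneg hB (hvar _)) (mul_nonneg hB (hvar _))
    (one_add_mul_variance_le_sum_pow hA hs0 hs h1 (fun i => ha i.1) ha1)
    (one_add_mul_variance_le_sum_pow hA hs0 hs h1 (fun i => hb i.2.1) hb1)
    (one_add_mul_variance_le_sum_pow hA hs0 hs h1 (fun i => hc i.2.2) hc1)) hs0.le
  have hpay := mul_le_mul_of_nonneg_right hAs (add_nonneg (add_nonneg (hvar fun i => a i.1)
    (hvar fun i => b i.2.1)) (hvar fun i => c i.2.2))
  linarith

theorem exists_nat_mul_one_add_inv_le (hs0 : 0 < s) :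
    ∃ A : ℕ, 2 ≤ A ∧ A * (1 + s⁻¹) ≤ s * (A * (A - 1) / 2 * (s / (1 + s))) := by
  obtain ⟨A, hA⟩ := exists_nat_ge (max 2 (1 + 2 * (1 + s⁻¹) / (s * (s / (1 + s)))))
  refine ⟨A, by exact_mod_cast (le_max_left _ _).trans hA, ?_⟩
  have hlarge : 2 * (1 + s⁻¹) ≤ (A - 1) * (s * (s / (1 + s))) := by
    rw [← div_le_iff₀ (by positivity)]
    linarith [(le_max_right _ _).trans hA]
  linarith [mul_le_mul_of_nonneg_left hlarge A.cast_nonneg]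

theorem exists_revHypercontractive (hl : ∀ i, 0 < l i) (h1 : ∑ i, l i = 1) :
    ∃ A : ℕ, 1 ≤ A ∧ RevHypercontractive A l := by
  have : Nonempty (Ω₁ × Ω₂ × Ω₃) :=
    univ_nonempty_iff.1 (nonempty_of_sum_ne_zero (h1.trans_ne one_ne_zero))
  obtain ⟨i₀, hi₀⟩ := Finite.exists_min l
  obtain ⟨A, hA, hAs⟩ := exists_nat_mul_one_add_inv_le (hl i₀)
  have hA0 : A ≠ 0 := by omega
  refine ⟨A, by omega, fun a b c ha hb hc => ?_⟩
  have hmean {x : Ω₁ × Ω₂ × Ω₃ → ℝ} (hx : ∀ i, 0 ≤ x i) : 0 ≤ ∑ i, l i * x i :=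
    sum_nonneg fun i _ => mul_nonneg (hl i).le (hx i)
  have hnonneg : 0 ≤ ∑ i, l i * (a i.1 * b i.2.1 * c i.2.2) ^ A :=
    hmean fun i => pow_nonneg (mul_nonneg (mul_nonneg (ha _) (hb _)) (hc _)) _
  rcases (hmean fun i => ha i.1).eq_or_lt with h | ha0
  · simpa [← h, hA0] using hnonneg
  rcases (hmean fun i => hb i.2.1).eq_or_lt with h | hb0
  · simpa [← h, hA0] using hnonneg
  rcases (hmean fun i => hc i.2.2).eq_or_lt with h | hc0
  · simpa [← h, hA0] using hnonneg
  have hnormalise {x : Ω₁ × Ω₂ × Ω₃ → ℝ} (hx : 0 < ∑ i, l i * x i) :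
      ∑ i, l i * (x i / ∑ j, l j * x j) = 1 := by
    simp only [← mul_div_assoc, ← sum_div, div_self hx.ne']
  have hunit := one_le_sum_mul_pow_of_mean_eq_one hA (hl i₀) hi₀ h1 hAs
    (fun i => div_nonneg (ha i) ha0.le) (fun i => div_nonneg (hb i) hb0.le)
    (fun i => div_nonneg (hc i) hc0.le) (hnormalise ha0) (hnormalise hb0) (hnormalise hc0)
  simp only [div_mul_div_comm] at hunit
  simp only [div_pow, ← mul_div_assoc, ← sum_div] at hunit
  rwa [le_div_iff₀ (by positivity), one_mul] at hunit

theorem RevHypercontractive.tensor {n : ℕ} {w : Fin n → Ω₁ × Ω₂ × Ω₃ → ℝ}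
    (hw : ∀ k i, 0 ≤ w k i) (hA : ∀ k, RevHypercontractive A (w k)) {F : (Fin n → Ω₁) → ℝ}
    {G : (Fin n → Ω₂) → ℝ} {H : (Fin n → Ω₃) → ℝ} (hF : ∀ x, 0 ≤ F x) (hG : ∀ x, 0 ≤ G x)
    (hH : ∀ x, 0 ≤ H x) :
    (prodExp w (fun x => F (fun k => (x k).1)) * prodExp w (fun x => G (fun k => (x k).2.1)) *
        prodExp w (fun x => H (fun k => (x k).2.2))) ^ A ≤
      prodExp w (fun x =>
        (F (fun k => (x k).1) * G (fun k => (x k).2.1) * H (fun k => (x k).2.2)) ^ A) := by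
  induction n with
  | zero => simp [prodExp_fin_zero]
  | succ n ih =>
    simp only [prodExp_fin_succ w, map_fin_cons fun i : Ω₁ × Ω₂ × Ω₃ => i.1,
      map_fin_cons fun i : Ω₁ × Ω₂ × Ω₃ => i.2.1, map_fin_cons fun i : Ω₁ × Ω₂ × Ω₃ => i.2.2]
    have htail {E : (Fin n → Ω₁ × Ω₂ × Ω₃) → ℝ} (hE : ∀ x, 0 ≤ E x) :
        0 ≤ prodExp (fun k : Fin n => w k.succ) E :=
      prodExp_nonneg (fun k i => hw k.succ i) hE
    refine (hA 0
      (fun j => prodExp (fun k : Fin n => w k.succ) fun x => F (Fin.cons j fun k => (x k).1))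
      (fun j => prodExp (fun k : Fin n => w k.succ) fun x => G (Fin.cons j fun k => (x k).2.1))
      (fun j => prodExp (fun k : Fin n => w k.succ) fun x => H (Fin.cons j fun k => (x k).2.2))
      (fun _ => htail fun _ => hF _) (fun _ => htail fun _ => hG _)
      (fun _ => htail fun _ => hH _)).trans
      (sum_le_sum fun i _ => mul_le_mul_of_nonneg_left ?_ (hw _ _))
    exact ih (w := fun k : Fin n => w k.succ) (F := fun x => F (Fin.cons i.1 x))
      (G := fun x => G (Fin.cons i.2.1 x)) (H := fun x => H (Fin.cons i.2.2 x))
      (fun k i => hw k.succ i) (fun k => hA k.succ) (fun _ => hF _) (fun _ => hG _) fun _ => hH _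

end Triple

end ReverseHypercontractivity

section Hypercontractivity

theorem one_add_mul_add_mul_sq_le_rpow {δ R x : ℝ} (hδ0 : 0 ≤ δ) (hδ1 : δ ≤ 1) (hx : 0 ≤ x)
    (hxR : x ≤ R) :
    1 + (2 - δ) * (x - 1) + (1 - δ * (R + 1)) * (x - 1) ^ 2 ≤ x ^ (2 - δ) := by
  rcases hx.eq_or_lt with rfl | hx0
  · rw [Real.zero_rpow (by linarith)]
    nlinarith
  have hlog : 1 - δ * (x - 1) ≤ x ^ (-δ) := by
    rw [Real.rpow_def_of_pos hx0]
    nlinarith [Real.add_one_le_exp (Real.log x * -δ), Real.log_le_sub_one_of_pos hx0]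
  calc 1 + (2 - δ) * (x - 1) + (1 - δ * (R + 1)) * (x - 1) ^ 2
      ≤ 1 + (2 - δ) * (x - 1) + (1 - δ * (x + 1)) * (x - 1) ^ 2 := by gcongr
    _ = x ^ 2 * (1 - δ * (x - 1)) := by ring
    _ ≤ x ^ 2 * x ^ (-δ) := by gcongr
    _ = x ^ (2 - δ) := by rw [sub_eq_add_neg, Real.rpow_add hx0, Real.rpow_two]

section Moments

variable {Ω : Type*} [Fintype Ω] {w a : Ω → ℝ} {s δ : ℝ}

theorem le_one_of_le_weight (hs0 : 0 < s) (hs : ∀ i, s ≤ w i) (h1 : ∑ i, w i = 1) : s ≤ 1 := by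
  obtain ⟨i, -, -⟩ := exists_ne_zero_of_sum_ne_zero (h1.trans_ne one_ne_zero)
  exact (hs i).trans (h1 ▸ single_le_sum (fun j _ => hs0.le.trans (hs j)) (mem_univ i))

theorem mixed_moment_le_sum_rpow_of_mean_eq_one (hs0 : 0 < s) (hs : ∀ i, s ≤ w i)
    (h1 : ∑ i, w i = 1) (hδ0 : 0 ≤ δ) (hδ1 : δ ≤ 1) (hδs : δ * (s⁻¹ + 1) ≤ s)
    (ha : ∀ i, 0 ≤ a i) (hmean : ∑ i, w i * a i = 1) :
    (s + (1 - s) * ∑ i, w i * a i ^ 2) ^ ((2 - δ) / 2) ≤ ∑ i, w i * a i ^ (2 - δ) := by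
  have hw (i : Ω) : 0 ≤ w i := hs0.le.trans (hs i)
  set V := ∑ i, w i * a i ^ 2 - 1 with hV
  have hvar : ∑ i, w i * (a i - 1) ^ 2 = V := by
    have h (i : Ω) : w i * (a i - 1) ^ 2 = w i * a i ^ 2 - 2 * (w i * a i) + w i := by ring
    simp only [h, sum_add_distrib, sum_sub_distrib, ← mul_sum, hmean, h1]
    ring
  have hV0 : 0 ≤ V := hvar ▸ sum_nonneg fun i _ => mul_nonneg (hw i) (sq_nonneg _)
  have hs1 := le_one_of_le_weight hs0 hs h1
  calc (s + (1 - s) * ∑ i, w i * a i ^ 2) ^ ((2 - δ) / 2)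
      = (1 + (1 - s) * V) ^ ((2 - δ) / 2) := by congr 1; rw [hV]; ring
    _ ≤ 1 + (2 - δ) / 2 * ((1 - s) * V) :=
        rpow_one_add_le_one_add_mul_self
          (by nlinarith [mul_nonneg (sub_nonneg.2 hs1) hV0]) (by linarith) (by linarith)
    _ ≤ 1 + (1 - δ * (s⁻¹ + 1)) * V := by nlinarith [mul_nonneg (sub_nonneg.2 hs1) hV0]
    _ = ∑ i, w i * (1 + (2 - δ) * (a i - 1) + (1 - δ * (s⁻¹ + 1)) * (a i - 1) ^ 2) := by
        simp only [mul_add, mul_sub, sum_add_distrib, sum_sub_distrib, mul_left_comm (w _),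
          ← mul_sum, hvar, hmean]
        simp only [mul_one, h1]
        ring
    _ ≤ ∑ i, w i * a i ^ (2 - δ) := sum_le_sum fun i _ => mul_le_mul_of_nonneg_left
        (one_add_mul_add_mul_sq_le_rpow hδ0 hδ1 (ha i)
          (le_inv_of_sum_weight_mul_eq_one hs0 hs ha hmean i)) (hw i)

theorem mixed_moment_le_sum_rpow (hs0 : 0 < s) (hs : ∀ i, s ≤ w i) (h1 : ∑ i, w i = 1)
    (hδ0 : 0 ≤ δ) (hδ1 : δ ≤ 1) (hδs : δ * (s⁻¹ + 1) ≤ s) (ha : ∀ i, 0 ≤ a i) :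
    (s * (∑ i, w i * a i) ^ 2 + (1 - s) * ∑ i, w i * a i ^ 2) ^ ((2 - δ) / 2) ≤
      ∑ i, w i * a i ^ (2 - δ) := by
  have hw (i : Ω) : 0 < w i := hs0.trans_le (hs i)
  have hnonneg (i : Ω) : 0 ≤ w i * a i := mul_nonneg (hw i).le (ha i)
  obtain ⟨M, hM⟩ : ∃ M, ∑ i, w i * a i = M := ⟨_, rfl⟩
  rw [hM]
  rcases (hM ▸ sum_nonneg fun i _ => hnonneg i : 0 ≤ M).eq_or_lt with rfl | hM0
  · have hzero (i : Ω) : a i = 0 := by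
      have h := (sum_eq_zero_iff_of_nonneg fun i _ => hnonneg i).1 hM i (mem_univ i)
      exact (mul_eq_zero.1 h).resolve_left (hw i).ne'
    have hp : 2 - δ ≠ 0 := by linarith
    simp [hzero, hp]
  have hunit := mixed_moment_le_sum_rpow_of_mean_eq_one hs0 hs h1 hδ0 hδ1 hδs
    (a := fun i => a i / M) (fun i => div_nonneg (ha i) hM0.le)
    (by simp only [← mul_div_assoc, ← sum_div, hM, div_self hM0.ne'])
  have hs1 := le_one_of_le_weight hs0 hs h1
  have hMp : (M ^ 2) ^ ((2 - δ) / 2) = M ^ (2 - δ) := by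
    rw [← Real.rpow_natCast_mul hM0.le]
    congr 1
    push_cast
    ring
  have hunit' : s + (1 - s) * ∑ i, w i * (a i / M) ^ 2 =
      (s * M ^ 2 + (1 - s) * ∑ i, w i * a i ^ 2) / M ^ 2 := by
    simp only [div_pow, ← mul_div_assoc, ← sum_div]
    field_simp
  have hsq : 0 ≤ s * M ^ 2 + (1 - s) * ∑ i, w i * a i ^ 2 :=
    add_nonneg (mul_nonneg hs0.le (sq_nonneg _)) (mul_nonneg (sub_nonneg.2 hs1)
      (sum_nonneg fun i _ => mul_nonneg (hw i).le (sq_nonneg _)))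
  rw [hunit', Real.div_rpow hsq (sq_nonneg _), hMp] at hunit
  simp only [Real.div_rpow (ha _) hM0.le, ← mul_div_assoc, ← sum_div] at hunit
  exact (div_le_div_iff_of_pos_right (by positivity)).1 hunit

end Moments

section Pair

variable {Ω₁ Ω₂ : Type*} [Fintype Ω₁] [Fintype Ω₂]

/-- Two-function forward hypercontractivity with exponent `p` of a law `l` on pairs. -/
def Hypercontractive (p : ℝ) (l : Ω₁ × Ω₂ → ℝ) : Prop :=
  ∀ (a : Ω₁ → ℝ) (b : Ω₂ → ℝ), (∀ i, 0 ≤ a i) → (∀ i, 0 ≤ b i) →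
    (∑ i, l i * (a i.1 * b i.2)) ^ p ≤ (∑ i, l i * a i.1 ^ p) * ∑ i, l i * b i.2 ^ p

variable {l : Ω₁ × Ω₂ → ℝ} {s : ℝ}

-- `l` dominates `s` times the product of its marginals, and the remainder has marginals scaled by
-- `1 - s`, so Cauchy–Schwarz for the remainder bounds the covariance-like difference.
theorem sq_sum_mul_sub_le (hs0 : 0 < s) (hs : ∀ i, s ≤ l i) (h1 : ∑ i, l i = 1) (a : Ω₁ → ℝ)
    (b : Ω₂ → ℝ) :
    (∑ i, l i * (a i.1 * b i.2) - s * ((∑ i, l i * a i.1) * ∑ i, l i * b i.2)) ^ 2 ≤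
      ((1 - s) * ∑ i, l i * a i.1 ^ 2) * ((1 - s) * ∑ i, l i * b i.2 ^ 2) := by
  classical
  have hl : l ∈ stdSimplex ℝ (Ω₁ × Ω₂) := ⟨fun i => hs0.le.trans (hs i), h1⟩
  have hν₁ := mapWeight_mem_stdSimplex Prod.fst hl
  have hν₂ := mapWeight_mem_stdSimplex Prod.snd hl
  set ν₁ := mapWeight Prod.fst l
  set ν₂ := mapWeight Prod.snd l
  have hprod (u : Ω₁ → ℝ) (v : Ω₂ → ℝ) : ∑ i : Ω₁ × Ω₂, ν₁ i.1 * ν₂ i.2 * (u i.1 * v i.2) =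
      (∑ i, l i * u i.1) * ∑ i, l i * v i.2 := by
    rw [← sum_mapWeight_mul Prod.fst, ← sum_mapWeight_mul Prod.snd, sum_mul_sum,
      Fintype.sum_prod_type]
    exact sum_congr rfl fun i _ => sum_congr rfl fun j _ => mul_mul_mul_comm ..
  have hrest (u : Ω₁ → ℝ) (v : Ω₂ → ℝ) :
      ∑ i : Ω₁ × Ω₂, (l i - s * (ν₁ i.1 * ν₂ i.2)) * (u i.1 * v i.2) =
        ∑ i, l i * (u i.1 * v i.2) - s * ((∑ i, l i * u i.1) * ∑ i, l i * v i.2) := by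
    rw [← hprod, mul_sum, ← sum_sub_distrib]
    exact sum_congr rfl fun i _ => by ring
  have hrest0 (i : Ω₁ × Ω₂) : 0 ≤ l i - s * (ν₁ i.1 * ν₂ i.2) := by
    have h := mul_le_one₀ (mem_Icc_of_mem_stdSimplex hν₁ i.1).2 (hν₂.1 i.2)
      (mem_Icc_of_mem_stdSimplex hν₂ i.2).2
    nlinarith [hs i]
  have hfst := hrest (fun i => a i ^ 2) fun _ => 1
  have hsnd := hrest (fun _ => 1) fun i => b i ^ 2
  simp only [mul_one, one_mul, h1, ← one_sub_mul] at hfst hsnd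
  rw [← hrest, ← hfst, ← hsnd]
  exact sum_sq_le_sum_mul_sum_of_sq_le_mul _ (fun i _ => mul_nonneg (hrest0 i) (sq_nonneg _))
    (fun i _ => mul_nonneg (hrest0 i) (sq_nonneg _)) fun i _ => le_of_eq (by ring)

theorem sq_mul_add_le {α β A B D : ℝ} (hs0 : 0 ≤ s) (hs1 : s ≤ 1) (hA : 0 ≤ A) (hB : 0 ≤ B)
    (hD : D ^ 2 ≤ ((1 - s) * A) * ((1 - s) * B)) :
    (s * (α * β) + D) ^ 2 ≤ (s * α ^ 2 + (1 - s) * A) * (s * β ^ 2 + (1 - s) * B) := by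
  have hcross : 2 * (α * β * D) ≤ (1 - s) * (α ^ 2 * B + β ^ 2 * A) := by
    refine le_of_sq_le_sq ?_ (mul_nonneg (sub_nonneg.2 hs1) (by positivity))
    calc (2 * (α * β * D)) ^ 2 = 4 * (α * β) ^ 2 * D ^ 2 := by ring
      _ ≤ 4 * (α * β) ^ 2 * (((1 - s) * A) * ((1 - s) * B)) := by gcongr
      _ ≤ ((1 - s) * (α ^ 2 * B + β ^ 2 * A)) ^ 2 := by
          nlinarith [sq_nonneg ((1 - s) * (α ^ 2 * B - β ^ 2 * A))]
  nlinarith [mul_le_mul_of_nonneg_left hcross hs0]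

theorem exists_hypercontractive (hl : ∀ i, 0 < l i) (h1 : ∑ i, l i = 1) :
    ∃ p : ℝ, 1 ≤ p ∧ p < 2 ∧ Hypercontractive p l := by
  have : Nonempty (Ω₁ × Ω₂) :=
    univ_nonempty_iff.1 (nonempty_of_sum_ne_zero (h1.trans_ne one_ne_zero))
  obtain ⟨i₀, hi₀⟩ := Finite.exists_min l
  have hs0 := hl i₀
  set s := l i₀
  have hs1 := le_one_of_le_weight hs0 hi₀ h1
  have hδs : s / (s⁻¹ + 1) * (s⁻¹ + 1) ≤ s := (div_mul_cancel₀ s (by positivity)).le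
  have hδ0 : 0 < s / (s⁻¹ + 1) := by positivity
  have hδ1 : s / (s⁻¹ + 1) ≤ 1 := (div_le_one (by positivity)).2 (by linarith [inv_pos.2 hs0])
  set δ := s / (s⁻¹ + 1)
  have hmoment {a : Ω₁ × Ω₂ → ℝ} (ha : ∀ i, 0 ≤ a i) :=
    mixed_moment_le_sum_rpow hs0 hi₀ h1 hδ0.le hδ1 hδs ha
  refine ⟨2 - δ, by linarith, by linarith, fun a b ha hb => ?_⟩
  have hsecond (x : Ω₁ × Ω₂ → ℝ) : 0 ≤ ∑ i, l i * x i ^ 2 :=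
    sum_nonneg fun i _ => mul_nonneg (hl i).le (sq_nonneg _)
  have hmixed (x : Ω₁ × Ω₂ → ℝ) :
      0 ≤ s * (∑ i, l i * x i) ^ 2 + (1 - s) * ∑ i, l i * x i ^ 2 :=
    add_nonneg (mul_nonneg hs0.le (sq_nonneg _)) (mul_nonneg (sub_nonneg.2 hs1) (hsecond x))
  have hcorr : 0 ≤ ∑ i, l i * (a i.1 * b i.2) :=
    sum_nonneg fun i _ => mul_nonneg (hl i).le (mul_nonneg (ha _) (hb _))
  have hsq := sq_mul_add_le (α := ∑ i, l i * a i.1) (β := ∑ i, l i * b i.2) hs0.le hs1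
    (hsecond fun i => a i.1) (hsecond fun i => b i.2) (sq_sum_mul_sub_le hs0 hi₀ h1 a b)
  rw [add_sub_cancel] at hsq
  calc (∑ i, l i * (a i.1 * b i.2)) ^ (2 - δ)
      = ((∑ i, l i * (a i.1 * b i.2)) ^ 2) ^ ((2 - δ) / 2) := by
        rw [← Real.rpow_natCast_mul hcorr]
        congr 1
        push_cast
        ring
    _ ≤ _ := Real.rpow_le_rpow (sq_nonneg _) hsq (by linarith)
    _ = _ := Real.mul_rpow (hmixed fun i => a i.1) (hmixed fun i => b i.2)
    _ ≤ _ := mul_le_mul (hmoment fun i => ha i.1) (hmoment fun i => hb i.2)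
        (Real.rpow_nonneg (hmixed fun i => b i.2) _)
        (sum_nonneg fun i _ => mul_nonneg (hl i).le (Real.rpow_nonneg (ha _) _))

theorem Hypercontractive.tensor {p : ℝ} (hp : 0 < p) {n : ℕ} {w : Fin n → Ω₁ × Ω₂ → ℝ}
    (hw : ∀ k i, 0 ≤ w k i) (h : ∀ k, Hypercontractive p (w k)) {F : (Fin n → Ω₁) → ℝ}
    {G : (Fin n → Ω₂) → ℝ} (hF : ∀ x, 0 ≤ F x) (hG : ∀ x, 0 ≤ G x) :
    prodExp w (fun x => F (fun k => (x k).1) * G (fun k => (x k).2)) ^ p ≤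
      prodExp w (fun x => F (fun k => (x k).1) ^ p) *
        prodExp w (fun x => G (fun k => (x k).2) ^ p) := by
  induction n with
  | zero => simp [prodExp_fin_zero, Real.mul_rpow (hF _) (hG _)]
  | succ n ih =>
    simp only [prodExp_fin_succ w, map_fin_cons fun i : Ω₁ × Ω₂ => i.1,
      map_fin_cons fun i : Ω₁ × Ω₂ => i.2]
    have htail {E : (Fin n → Ω₁ × Ω₂) → ℝ} (hE : ∀ x, 0 ≤ E x) :
        0 ≤ prodExp (fun k : Fin n => w k.succ) E :=
      prodExp_nonneg (fun k i => hw k.succ i) hE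
    have ha (j : Ω₁) := htail fun x => Real.rpow_nonneg (hF (Fin.cons j fun k => (x k).1)) p
    have hb (j : Ω₂) := htail fun x => Real.rpow_nonneg (hG (Fin.cons j fun k => (x k).2)) p
    have hroot {y : ℝ} (hy : 0 ≤ y) : (y ^ p⁻¹) ^ p = y := Real.rpow_inv_rpow hy hp.ne'
    have hhead := h 0 _ _ (fun j => Real.rpow_nonneg (ha j) p⁻¹)
      (fun j => Real.rpow_nonneg (hb j) p⁻¹)
    simp only [hroot (ha _), hroot (hb _)] at hhead
    refine (Real.rpow_le_rpow (sum_nonneg fun i _ => mul_nonneg (hw 0 i)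
      (htail fun x => mul_nonneg (hF _) (hG _))) (sum_le_sum fun i _ =>
      mul_le_mul_of_nonneg_left ?_ (hw 0 i)) hp.le).trans hhead
    rw [← Real.mul_rpow (ha _) (hb _), Real.le_rpow_inv_iff_of_pos
      (htail fun x => mul_nonneg (hF _) (hG _)) (mul_nonneg (ha _) (hb _)) hp]
    exact ih (w := fun k : Fin n => w k.succ) (F := fun x => F (Fin.cons i.1 x))
      (G := fun x => G (Fin.cons i.2 x)) (fun k i => hw k.succ i) (fun k => h k.succ)
      (fun _ => hF _) fun _ => hG _

end Pair

section Replica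

variable {Ω₁ Ω₂ : Type*} [Fintype Ω₁] [Fintype Ω₂]

theorem mapWeight_fst_apply [DecidableEq Ω₁] (l : Ω₁ × Ω₂ → ℝ) (x : Ω₁) :
    mapWeight Prod.fst l x = ∑ y, l (x, y) := by
  simp [mapWeight, sum_filter, Fintype.sum_prod_type_right]

theorem mapWeight_snd_apply [DecidableEq Ω₂] (l : Ω₁ × Ω₂ → ℝ) (y : Ω₂) :
    mapWeight Prod.snd l y = ∑ x, l (x, y) := by
  simp [mapWeight, sum_filter, Fintype.sum_prod_type]

variable [DecidableEq Ω₁]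

/-- The transition kernel of the pair law `l` given the first coordinate; it is `0` where the
first marginal vanishes. -/
noncomputable def condKernel (l : Ω₁ × Ω₂ → ℝ) (x : Ω₁) (y : Ω₂) : ℝ :=
  l (x, y) / mapWeight Prod.fst l x

/-- The law of two second coordinates that are conditionally independent given the first one. -/
noncomputable def replicaLaw (l : Ω₁ × Ω₂ → ℝ) (z : Ω₂ × Ω₂) : ℝ :=
  ∑ x, mapWeight Prod.fst l x * (condKernel l x z.1 * condKernel l x z.2)

variable {l : Ω₁ × Ω₂ → ℝ}

theorem mapWeight_fst_mul_condKernel (hl : ∀ i, 0 ≤ l i) (x : Ω₁) (y : Ω₂) :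
    mapWeight Prod.fst l x * condKernel l x y = l (x, y) := by
  refine mul_div_cancel_of_imp' fun h => ?_
  rw [mapWeight_fst_apply] at h
  exact (sum_eq_zero_iff_of_nonneg fun y _ => hl (x, y)).1 h y (mem_univ y)

theorem mul_sum_condKernel (hl : ∀ i, 0 ≤ l i) (x : Ω₁) (y : Ω₂) :
    l (x, y) * ∑ y', condKernel l x y' = l (x, y) := by
  rw [← mapWeight_fst_mul_condKernel hl, mul_right_comm, mul_sum]
  simp only [mapWeight_fst_mul_condKernel hl, ← mapWeight_fst_apply]

theorem mapWeight_fst_replicaLaw [DecidableEq Ω₂] (hl : ∀ i, 0 ≤ l i) :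
    mapWeight Prod.fst (replicaLaw l) = mapWeight Prod.snd l := by
  ext y
  simp only [mapWeight_fst_apply (replicaLaw l), mapWeight_snd_apply, replicaLaw, ← mul_assoc,
    mapWeight_fst_mul_condKernel hl]
  rw [sum_comm]
  simp only [← mul_sum, mul_sum_condKernel hl]

theorem mapWeight_snd_replicaLaw [DecidableEq Ω₂] (hl : ∀ i, 0 ≤ l i) :
    mapWeight Prod.snd (replicaLaw l) = mapWeight Prod.snd l := by
  rw [← mapWeight_fst_replicaLaw hl]
  ext y
  simp only [mapWeight_fst_apply, mapWeight_snd_apply, replicaLaw, mul_comm (condKernel l _ y)]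

theorem replicaLaw_pos (hl : ∀ i, 0 ≤ l i)
    (hconn : ∀ y y', ∃ x, 0 < l (x, y) ∧ 0 < l (x, y')) (z : Ω₂ × Ω₂) : 0 < replicaLaw l z := by
  have hterm (x : Ω₁) :
      mapWeight Prod.fst l x * (condKernel l x z.1 * condKernel l x z.2) =
        l (x, z.1) * l (x, z.2) / mapWeight Prod.fst l x := by
    rw [← mul_assoc, mapWeight_fst_mul_condKernel hl, condKernel, mul_div_assoc]
  have hmarg (x : Ω₁) : 0 ≤ mapWeight Prod.fst l x := sum_nonneg fun i _ => hl i
  obtain ⟨x, hx, hx'⟩ := hconn z.1 z.2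
  simp only [replicaLaw, hterm]
  refine sum_pos' (fun x _ => div_nonneg (mul_nonneg (hl _) (hl _)) (hmarg x))
    ⟨x, mem_univ x, div_pos (mul_pos hx hx') (mapWeight_fst_apply l x ▸ ?_)⟩
  exact sum_pos' (fun y _ => hl _) ⟨z.1, mem_univ _, hx⟩

variable {ι : Type*} [Fintype ι] [DecidableEq ι]

theorem sq_prodExp_mul_le_replicaLaw (hl : ∀ i, 0 ≤ l i) (F : (ι → Ω₁) → ℝ)
    (G : (ι → Ω₂) → ℝ) :
    prodExp (fun _ => l) (fun x => F (fun k => (x k).1) * G (fun k => (x k).2)) ^ 2 ≤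
      prodExp (fun _ => l) (fun x => F (fun k => (x k).1) ^ 2) *
        prodExp (fun _ => replicaLaw l) (fun z => G (fun k => (z k).1) * G (fun k => (z k).2)) := by
  have hcorr := prodExp_mul_kernel (fun _ : ι => mapWeight Prod.fst l)
    (fun _ => condKernel l) F G
  have hreplica := prodExp_kernel (fun _ : ι => mapWeight Prod.fst l)
    (fun _ x (z : Ω₂ × Ω₂) => condKernel l x z.1 * condKernel l x z.2)
    fun z => G (fun k => (z k).1) * G (fun k => (z k).2)
  simp only [mapWeight_fst_mul_condKernel hl, ← prodExp_mul_prodExp] at hcorr hreplica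
  rw [← hcorr, prodExp_map (fun _ => l) (fun _ => Prod.fst) fun x => F x ^ 2]
  refine (prodExp_mul_sq_le (fun _ _ => sum_nonneg fun i _ => hl i) _ _).trans_eq ?_
  simp only [sq (prodExp _ G)]
  exact congrArg _ hreplica

theorem prodExp_replicaLaw_le (hl : ∀ i, 0 ≤ l i) {p : ℝ} (hp1 : 1 ≤ p)
    (hp : Hypercontractive p (replicaLaw l)) {n : ℕ} {G : (Fin n → Ω₂) → ℝ}
    (hG : ∀ y, G y ∈ Set.Icc 0 1) :
    prodExp (fun _ => replicaLaw l) (fun z => G (fun k => (z k).1) * G (fun k => (z k).2)) ≤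
      prodExp (fun _ => l) (fun x => G (fun k => (x k).2)) ^ (2 / p) := by
  classical
  have hp0 : 0 < p := by linarith
  have hmarg (y : Ω₂) : 0 ≤ mapWeight Prod.snd l y := sum_nonneg fun i _ => hl i
  have hkernel (x : Ω₁) (y : Ω₂) : 0 ≤ condKernel l x y :=
    div_nonneg (hl _) (sum_nonneg fun i _ => hl i)
  have hw (z : Ω₂ × Ω₂) : 0 ≤ replicaLaw l z := sum_nonneg fun x _ =>
    mul_nonneg (sum_nonneg fun i _ => hl i) (mul_nonneg (hkernel x _) (hkernel x _))
  have hGp : prodExp (fun _ => mapWeight Prod.snd l) (fun y => G y ^ p) ≤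
      prodExp (fun _ => mapWeight Prod.snd l) G :=
    prodExp_mono (fun _ => hmarg) fun y => Real.rpow_le_self_of_le_one (hG y).1 (hG y).2 hp1
  have hGp0 : 0 ≤ prodExp (fun _ : Fin n => mapWeight Prod.snd l) fun y => G y ^ p :=
    prodExp_nonneg (fun _ => hmarg) fun y => Real.rpow_nonneg (hG y).1 p
  have hG0 := hGp0.trans hGp
  have htensor := Hypercontractive.tensor hp0 (fun _ : Fin n => hw) (fun _ => hp)
    (fun y => (hG y).1) fun y => (hG y).1
  rw [prodExp_map (fun _ => replicaLaw l) (fun _ => Prod.fst) fun y => G y ^ p,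
    prodExp_map (fun _ => replicaLaw l) (fun _ => Prod.snd) fun y => G y ^ p] at htensor
  simp only [mapWeight_fst_replicaLaw hl, mapWeight_snd_replicaLaw hl] at htensor
  rw [prodExp_map (fun _ => l) (fun _ => Prod.snd) G, div_eq_mul_inv, Real.rpow_mul hG0,
    Real.le_rpow_inv_iff_of_pos (prodExp_nonneg (fun _ => hw) fun _ =>
      mul_nonneg (hG _).1 (hG _).1) (Real.rpow_nonneg hG0 _) hp0, Real.rpow_two, sq]
  exact htensor.trans (mul_le_mul hGp hGp hGp0 hG0)

end Replica

/-- Small-set expansion for the law `l` of two correlated components: for every number of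
coordinates, a set `G` of measure at most `η` is correlated with any `F` at most at the level
`ω`. -/
def SmallSetExpanding {Ω₁ Ω₂ : Type*} [Fintype Ω₁] [Fintype Ω₂] (l : Ω₁ × Ω₂ → ℝ) (ω η : ℝ) :
    Prop :=
  ∀ (n : ℕ) (F : (Fin n → Ω₁) → ℝ) (G : (Fin n → Ω₂) → ℝ),
    (∀ x, F x ∈ Set.Icc 0 1) → (∀ y, G y ∈ Set.Icc 0 1) →
    prodExp (fun _ => l) (fun x => G (fun k => (x k).2)) ≤ η →
    prodExp (fun _ => l) (fun x => F (fun k => (x k).1) * G (fun k => (x k).2)) ≤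
      ω * (prodExp (fun _ => l) (fun x => F (fun k => (x k).1)) +
        prodExp (fun _ => l) (fun x => G (fun k => (x k).2)))

theorem exists_smallSetExpanding {Ω₁ Ω₂ : Type*} [Fintype Ω₁] [Fintype Ω₂]
    {l : Ω₁ × Ω₂ → ℝ} (hl : l ∈ stdSimplex ℝ (Ω₁ × Ω₂))
    (hconn : ∀ y y', ∃ x, 0 < l (x, y) ∧ 0 < l (x, y')) {ω : ℝ} (hω : 0 < ω) :
    ∃ η > 0, SmallSetExpanding l ω η := by
  classical
  have hreplica : ∑ z, replicaLaw l z = 1 := by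
    have h := sum_mapWeight_mul Prod.fst (replicaLaw l) fun _ => 1
    rw [mapWeight_fst_replicaLaw hl.1, sum_mapWeight_mul] at h
    simpa [hl.2] using h.symm
  obtain ⟨p, hp1, hp2, hp⟩ := exists_hypercontractive (replicaLaw_pos hl.1 hconn) hreplica
  have hc : 0 < 2 / p - 1 := by rw [sub_pos, one_lt_div (by linarith)]; exact hp2
  refine ⟨(ω ^ 2) ^ (2 / p - 1)⁻¹, by positivity, fun n F G hF hG hη => ?_⟩
  have hsq := sq_prodExp_mul_le_replicaLaw hl.1 F G
  have hf2 := prodExp_mono (fun _ : Fin n => hl.1) fun x =>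
    pow_le_of_le_one (hF fun k => (x k).1).1 (hF _).2 two_ne_zero
  have hf0 := prodExp_nonneg (fun _ : Fin n => hl.1) fun x => (hF fun k => (x k).1).1
  have hr := prodExp_replicaLaw_le hl.1 hp1 hp hG
  have hr0 := prodExp_nonneg (fun (_ : Fin n) z => (replicaLaw_pos hl.1 hconn z).le)
    fun z => mul_nonneg (hG fun k => (z k).1).1 (hG fun k => (z k).2).1
  have hg0 := prodExp_nonneg (fun _ : Fin n => hl.1) fun x => (hG fun k => (x k).2).1
  set f := prodExp (fun _ => l) fun x => F fun k => (x k).1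
  set g := prodExp (fun _ => l) fun x => G fun k => (x k).2
  have hgain : g ^ (2 / p) ≤ ω ^ 2 * g := by
    rw [← add_sub_cancel 1 (2 / p), Real.rpow_one_add' hg0 (by linarith), mul_comm]
    exact mul_le_mul_of_nonneg_right
      ((Real.le_rpow_inv_iff_of_pos hg0 (sq_nonneg ω) hc).1 hη) hg0
  refine le_of_sq_le_sq ?_ (mul_nonneg hω.le (add_nonneg hf0 hg0))
  calc _ ≤ f * (ω ^ 2 * g) := hsq.trans (mul_le_mul hf2 (hr.trans hgain) hr0 hf0)
    _ ≤ (ω * (f + g)) ^ 2 := by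
        have h : f * g ≤ (f + g) ^ 2 := by nlinarith
        nlinarith [mul_le_mul_of_nonneg_left h (sq_nonneg ω)]

end Hypercontractivity

section Smoothing

/-- The weight function of a Bernoulli variable which is `true` with probability `q`. -/
def bernoulliWeight (q : ℝ) (x : Bool) : ℝ :=
  if x = true then q else 1 - q

/-- The character `x ↦ (-1) ^ x` of `{0,1}`. -/
def boolSign : Bool → ℝ
  | false => 1
  | true => -1

/-- The Markov kernel from `{⋆, 0, 1}` to `{0,1}` which fixes `0` and `1` and replaces the star
`none` by a uniform bit. -/
noncomputable def fillStar : Option Bool → Bool → ℝ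
  | none, _ => 1 / 2
  | some x, y => if x = y then 1 else 0

theorem fillStar_mem_stdSimplex (s : Option Bool) : fillStar s ∈ stdSimplex ℝ Bool := by
  rcases s with _ | x
  · exact ⟨fun _ => by norm_num [fillStar], by norm_num [fillStar]⟩
  · exact ⟨fun y => by simp only [fillStar]; split_ifs <;> norm_num, by simp [fillStar]⟩

/-- The law on `{⋆, 0, 1}` giving mass `t` to the star which `fillStar` turns into the Bernoulli
law of parameter `q`. -/
noncomputable def starWeight (q t : ℝ) : Option Bool → ℝ
  | none => t
  | some true => q - t / 2
  | some false => 1 - q - t / 2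

theorem sum_starWeight (q t : ℝ) : ∑ s, starWeight q t s = 1 := by
  simp only [Fintype.sum_option, Fintype.sum_bool, starWeight]
  ring

theorem sum_starWeight_mul_fillStar (q t : ℝ) (x : Bool) :
    ∑ s, starWeight q t s * fillStar s x = bernoulliWeight q x := by
  cases x <;> simp [Fintype.sum_option, starWeight, fillStar, bernoulliWeight] <;> ring

theorem sum_bernoulliWeight (q : ℝ) : ∑ x, bernoulliWeight q x = 1 := by
  simp [bernoulliWeight]

section Derivative

variable {ι : Type*} [DecidableEq ι]

/-- The discrete derivative of `f` in the coordinate `k`. -/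
def boolDeriv (k : ι) (f : (ι → Bool) → ℝ) (x : ι → Bool) : ℝ :=
  f (Function.update x k false) - f (Function.update x k true)

theorem abs_boolDeriv_le_one (k : ι) {f : (ι → Bool) → ℝ} (hf : ∀ x, f x ∈ Set.Icc 0 1)
    (x : ι → Bool) : |boolDeriv k f x| ≤ 1 := by
  have h₀ := hf (Function.update x k false)
  have h₁ := hf (Function.update x k true)
  rw [boolDeriv, abs_le]
  exact ⟨by linarith [h₀.1, h₁.2], by linarith [h₀.2, h₁.1]⟩

theorem boolDeriv_one_sub (k : ι) (f : (ι → Bool) → ℝ) :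
    boolDeriv k (fun x => 1 - f x) = fun x => -1 * boolDeriv k f x := by
  funext x
  simp only [boolDeriv]
  ring

end Derivative

section Influence

variable {ι : Type*} [Fintype ι] [DecidableEq ι]

/-- The multilinear average of `f` over the fillings of the stars of a partial assignment. -/
noncomputable def smooth (f : (ι → Bool) → ℝ) (X : ι → Option Bool) : ℝ :=
  prodExp (fun k => fillStar (X k)) f

theorem abs_smooth_le_one {f : (ι → Bool) → ℝ} (hf : ∀ x, |f x| ≤ 1) (X : ι → Option Bool) :
    |smooth f X| ≤ 1 :=
  (abs_prodExp_le (fun _ => (fillStar_mem_stdSimplex _).1) f).trans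
    (prodExp_le_one (fun _ => fillStar_mem_stdSimplex _) hf)

theorem prodExp_smooth (q t : ℝ) (f : (ι → Bool) → ℝ) :
    prodExp (fun _ => starWeight q t) (smooth f) = prodExp (fun _ => bernoulliWeight q) f := by
  refine (prodExp_kernel (fun _ => starWeight q t) (fun _ => fillStar) f).trans ?_
  simp only [sum_starWeight_mul_fillStar]

/-- The influence of the coordinate `k` on the smoothed function. -/
noncomputable def influence (q t : ℝ) (k : ι) (f : (ι → Bool) → ℝ) : ℝ :=
  prodExp (fun _ => starWeight q t) fun X => smooth (boolDeriv k f) X ^ 2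

theorem influence_one_sub (q t : ℝ) (k : ι) (f : (ι → Bool) → ℝ) :
    influence q t k (fun x => 1 - f x) = influence q t k f := by
  simp only [influence, smooth, boolDeriv_one_sub, prodExp_const_mul, mul_pow, neg_one_sq, one_mul]

end Influence

section Fin

variable {n : ℕ}

theorem smooth_cons (f : (Fin (n + 1) → Bool) → ℝ) (s : Option Bool) (X : Fin n → Option Bool) :
    smooth f (Fin.cons s X) =
      smooth (fun y => ∑ b, fillStar s b * f (Fin.cons b y)) X := by
  simp only [smooth, prodExp_fin_succ, Fin.cons_zero, Fin.cons_succ, prodExp_sum,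
    prodExp_const_mul]

theorem boolDeriv_zero_cons (f : (Fin (n + 1) → Bool) → ℝ) (b : Bool) (y : Fin n → Bool) :
    boolDeriv 0 f (Fin.cons b y) = f (Fin.cons false y) - f (Fin.cons true y) := by
  simp only [boolDeriv, Fin.update_cons_zero]

theorem boolDeriv_succ_cons (f : (Fin (n + 1) → Bool) → ℝ) (k : Fin n) (b : Bool)
    (y : Fin n → Bool) :
    boolDeriv k.succ f (Fin.cons b y) = boolDeriv k (fun y => f (Fin.cons b y)) y := by
  simp only [boolDeriv, Fin.cons_update]

theorem influence_succ (q t : ℝ) (k : Fin n) (f : (Fin (n + 1) → Bool) → ℝ) :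
    influence q t k.succ f = ∑ s, starWeight q t s *
      influence q t k (fun y => ∑ b, fillStar s b * f (Fin.cons b y)) := by
  have hderiv (s : Option Bool) :
      (fun y => ∑ b, fillStar s b * boolDeriv k (fun y => f (Fin.cons b y)) y) =
        boolDeriv k fun y => ∑ b, fillStar s b * f (Fin.cons b y) := by
    funext y
    simp only [boolDeriv, mul_sub, sum_sub_distrib]
  simp only [influence, prodExp_fin_succ, smooth_cons, boolDeriv_succ_cons, hderiv]

theorem influence_zero_le {q t : ℝ} (hw : starWeight q t ∈ stdSimplex ℝ (Option Bool))
    (f : (Fin (n + 1) → Bool) → ℝ) :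
    influence q t 0 f ≤ prodExp (fun _ => bernoulliWeight q) fun y =>
      (f (Fin.cons false y) - f (Fin.cons true y)) ^ 2 := by
  simp only [influence, prodExp_fin_succ, smooth_cons, boolDeriv_zero_cons, ← sum_mul,
    (fillStar_mem_stdSimplex _).2, one_mul, sum_starWeight]
  rw [← prodExp_smooth q t]
  exact prodExp_mono (fun _ => hw.1) fun X => sq_prodExp_le (fun _ => fillStar_mem_stdSimplex _) _

theorem sum_starWeight_mul_sq_fill (q t : ℝ) (φ : Bool → ℝ) :
    ∑ s, starWeight q t s * (∑ b, fillStar s b * φ b) ^ 2 =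
      ∑ b, bernoulliWeight q b * φ b ^ 2 - t / 4 * (φ false - φ true) ^ 2 := by
  simp [Fintype.sum_option, starWeight, fillStar, bernoulliWeight]
  ring

-- The variance lost by smoothing, counted coordinate by coordinate.
theorem sum_influence_le {q t : ℝ} (ht : 0 ≤ t)
    (hw : starWeight q t ∈ stdSimplex ℝ (Option Bool)) (f : (Fin n → Bool) → ℝ) :
    prodExp (fun _ => starWeight q t) (fun X => smooth f X ^ 2) +
        t / 4 * ∑ k, influence q t k f ≤
      prodExp (fun _ => bernoulliWeight q) fun x => f x ^ 2 := by
  induction n with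
  | zero => simp [prodExp_fin_zero, smooth]
  | succ n ih =>
    let slice (s : Option Bool) (y : Fin n → Bool) := ∑ b, fillStar s b * f (Fin.cons b y)
    have hslices : ∑ s, starWeight q t s *
        prodExp (fun _ => bernoulliWeight q) (fun y => slice s y ^ 2) =
        prodExp (fun _ => bernoulliWeight q) (fun x => f x ^ 2) -
          t / 4 * prodExp (fun _ => bernoulliWeight q) fun y =>
            (f (Fin.cons false y) - f (Fin.cons true y)) ^ 2 := by
      rw [prodExp_fin_succ]
      simp only [← prodExp_const_mul, ← prodExp_sum, ← prodExp_sub, slice,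
        sum_starWeight_mul_sq_fill]
    have hih := sum_le_sum fun s (_ : s ∈ univ) =>
      mul_le_mul_of_nonneg_left (ih (slice s)) (hw.1 s)
    have hzero := mul_le_mul_of_nonneg_left (influence_zero_le hw f) (show 0 ≤ t / 4 by positivity)
    rw [hslices] at hih
    rw [prodExp_fin_succ, Fin.sum_univ_succ]
    simp only [smooth_cons, influence_succ]
    simp only [mul_add, sum_add_distrib, mul_sum, slice] at hih ⊢
    rw [sum_comm] at hih
    simp only [mul_left_comm (t / 4)] at *
    linarith

end Fin

section TripleCorr

variable {ι Ω₁ Ω₂ Ω₃ : Type*} [Fintype ι] [DecidableEq ι] [Fintype Ω₁] [Fintype Ω₂] [Fintype Ω₃]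

/-- The correlation of three functions evaluated along the three components of independent
coordinates with weights `w k`. -/
def tripleCorr (w : ι → Ω₁ × Ω₂ × Ω₃ → ℝ) (F : (ι → Ω₁) → ℝ) (G : (ι → Ω₂) → ℝ)
    (H : (ι → Ω₃) → ℝ) : ℝ :=
  prodExp w fun x => F (fun k => (x k).1) * G (fun k => (x k).2.1) * H (fun k => (x k).2.2)

end TripleCorr

end Smoothing

/-- The weight function on `{0,1}³` with masses `a`, `b`, `c` on the vectors of weight `0`, `1`,
`3`. The vectors of weight `2` violate transitivity. -/
def tripleWeight (a b c : ℝ) : Bool × Bool × Bool → ℝ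
  | (false, false, false) => a
  | (true, false, false) | (false, true, false) | (false, false, true) => b
  | (true, true, true) => c
  | _ => 0

/-- The law of the restriction of an exchangeable random equivalence relation to the three pairs
of a triple: `a`, `b`, `c` are the masses of the partitions into three classes, into two classes
(in each of the three ways) and into one class. -/
structure TripleWeights where
  (a b c : ℝ)
  a_pos : 0 < a
  b_pos : 0 < b
  c_pos : 0 < c
  sum_eq_one : a + 3 * b + c = 1

namespace TripleWeights

variable (W : TripleWeights)

/-- The probability that a given pair is related. -/
def q : ℝ := W.b + W.c

/-- The mass of the star in the smoothed laws. -/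
noncomputable def t : ℝ := min W.a W.b / 2

/-- The size of the perturbation which gives the law of a triple full support. -/
noncomputable def θ : ℝ := min W.b W.c / 2

/-- The law on `{0,1}³` described by `W`. -/
def base : Bool × Bool × Bool → ℝ := tripleWeight W.a W.b W.c

/-- The law `W.base` tilted by the character of `{0,1}³` of degree three, which changes no marginal
law of two components. -/
def tilt (ϑ : ℝ) (i : Bool × Bool × Bool) : ℝ :=
  W.base i + ϑ * (boolSign i.1 * boolSign i.2.1 * boolSign i.2.2)

/-- A law on `{⋆, 0, 1}³` from which `fillStar`, applied to each component independently, produces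
`W.tilt ϑ`. -/
noncomputable def starTilt (ϑ : ℝ) : Option Bool × Option Bool × Option Bool → ℝ
  | (some x, some y, some z) => tripleWeight (W.a - 3 * W.t / 2) (W.b - W.t / 2) W.c (x, y, z) +
      ϑ * (boolSign x * boolSign y * boolSign z)
  | (none, some false, some false) | (some false, none, some false)
  | (some false, some false, none) => W.t
  | _ => 0

theorem tilt_zero : W.tilt 0 = W.base := by
  funext i
  simp only [tilt, zero_mul, add_zero]

theorem t_pos : 0 < W.t := half_pos (lt_min W.a_pos W.b_pos)

theorem t_le_a : W.t ≤ W.a / 2 := by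
  simp only [t]
  gcongr
  exact min_le_left _ _

theorem t_le_b : W.t ≤ W.b / 2 := by
  simp only [t]
  gcongr
  exact min_le_right _ _

theorem θ_pos : 0 < W.θ := half_pos (lt_min W.b_pos W.c_pos)

theorem θ_le_b : W.θ ≤ W.b / 2 := by
  simp only [θ]
  gcongr
  exact min_le_left _ _

theorem θ_le_c : W.θ ≤ W.c / 2 := by
  simp only [θ]
  gcongr
  exact min_le_right _ _

theorem bernoulliWeight_pos (x : Bool) : 0 < bernoulliWeight W.q x := by
  have := W.sum_eq_one
  have := W.a_pos
  have := W.b_pos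
  have := W.c_pos
  cases x <;> simp only [bernoulliWeight, q] <;> norm_num <;> linarith

theorem starWeight_mem_stdSimplex : starWeight W.q W.t ∈ stdSimplex ℝ (Option Bool) := by
  refine ⟨fun s => ?_, sum_starWeight _ _⟩
  have := W.sum_eq_one
  have := W.a_pos
  have := W.c_pos
  have := W.t_pos
  have := W.t_le_b
  rcases s with _ | _ | _ <;> simp only [starWeight, q] <;> linarith

theorem tilt_pos (i : Bool × Bool × Bool) : 0 < W.tilt W.θ i := by
  have := W.a_pos
  have := W.θ_pos
  have := W.θ_le_b
  have := W.θ_le_c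
  rcases i with ⟨_ | _, _ | _, _ | _⟩ <;>
    simp only [tilt, base, tripleWeight, boolSign] <;> linarith

theorem sum_tilt (ϑ : ℝ) : ∑ i, W.tilt ϑ i = 1 := by
  simp only [Fintype.sum_prod_type, Fintype.sum_bool, tilt, base, tripleWeight, boolSign]
  linarith [W.sum_eq_one]

theorem base_mem_stdSimplex : W.base ∈ stdSimplex ℝ (Bool × Bool × Bool) := by
  refine ⟨?_, W.tilt_zero ▸ W.sum_tilt 0⟩
  rintro ⟨_ | _, _ | _, _ | _⟩ <;>
    simp only [base, tripleWeight, W.a_pos.le, W.b_pos.le, W.c_pos.le, le_refl]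

theorem starTilt_nonneg {ϑ : ℝ} (hϑ : ϑ ∈ Set.Icc 0 W.θ)
    (i : Option Bool × Option Bool × Option Bool) : 0 ≤ W.starTilt ϑ i := by
  have := hϑ.1
  have := hϑ.2
  have := W.t_pos
  have := W.t_le_a
  have := W.t_le_b
  have := W.θ_pos
  have := W.θ_le_b
  have := W.θ_le_c
  rcases i with ⟨_ | _ | _, _ | _ | _, _ | _ | _⟩ <;>
    simp only [starTilt, tripleWeight, boolSign] <;> linarith

theorem sum_starTilt_mul_fillStar (ϑ : ℝ) (i : Bool × Bool × Bool) :
    ∑ s, W.starTilt ϑ s * (fillStar s.1 i.1 * (fillStar s.2.1 i.2.1 * fillStar s.2.2 i.2.2)) =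
      W.tilt ϑ i := by
  rcases i with ⟨_ | _, _ | _, _ | _⟩ <;>
    simp [Fintype.sum_prod_type, Fintype.sum_option, starTilt, fillStar, tilt, base, tripleWeight,
      boolSign] <;> ring

theorem sum_starTilt (ϑ : ℝ) : ∑ s, W.starTilt ϑ s = 1 := by
  simp only [Fintype.sum_prod_type, Fintype.sum_option, Fintype.sum_bool, starTilt, tripleWeight,
    boolSign]
  linarith [W.sum_eq_one]

theorem tripleCorr_smooth {n : ℕ} (ϑ : Fin n → ℝ) (f g h : (Fin n → Bool) → ℝ) :
    tripleCorr (fun k => W.starTilt (ϑ k)) (smooth f) (smooth g) (smooth h) =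
      tripleCorr (fun k => W.tilt (ϑ k)) f g h := by
  let K (s : Option Bool × Option Bool × Option Bool) (i : Bool × Bool × Bool) :=
    fillStar s.1 i.1 * (fillStar s.2.1 i.2.1 * fillStar s.2.2 i.2.2)
  have hfill (X : Fin n → Option Bool × Option Bool × Option Bool) :
      smooth f (fun k => (X k).1) * smooth g (fun k => (X k).2.1) * smooth h (fun k => (X k).2.2) =
        prodExp (fun k => K (X k)) fun x =>
          f (fun k => (x k).1) * g (fun k => (x k).2.1) * h (fun k => (x k).2.2) := by
    simp only [smooth, mul_assoc]
    rw [prodExp_mul_prodExp _ _ g h, prodExp_mul_prodExp]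
  simp only [tripleCorr, hfill, prodExp_kernel _ fun _ => K]
  simp only [K, sum_starTilt_mul_fillStar]

section Marginals

theorem mapWeight_fst_starTilt (ϑ : ℝ) :
    mapWeight (fun i => i.1) (W.starTilt ϑ) = starWeight W.q W.t := by
  funext s
  have := W.sum_eq_one
  rcases s with _ | _ | _ <;>
    simp [mapWeight, sum_filter, Fintype.sum_prod_type, Fintype.sum_option, starTilt, tripleWeight,
      boolSign, starWeight, q] <;> linarith

theorem mapWeight_snd_starTilt (ϑ : ℝ) :
    mapWeight (fun i => i.2.1) (W.starTilt ϑ) = starWeight W.q W.t := by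
  funext s
  have := W.sum_eq_one
  rcases s with _ | _ | _ <;>
    simp [mapWeight, sum_filter, Fintype.sum_prod_type, Fintype.sum_option, starTilt, tripleWeight,
      boolSign, starWeight, q] <;> linarith

theorem mapWeight_trd_starTilt (ϑ : ℝ) :
    mapWeight (fun i => i.2.2) (W.starTilt ϑ) = starWeight W.q W.t := by
  funext s
  have := W.sum_eq_one
  rcases s with _ | _ | _ <;>
    simp [mapWeight, sum_filter, Fintype.sum_prod_type, Fintype.sum_option, starTilt, tripleWeight,
      boolSign, starWeight, q] <;> linarith

/-- The law of the first two components of `W.starTilt ϑ`, which does not depend on `ϑ`. -/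
noncomputable def starPair : Option Bool × Option Bool → ℝ :=
  mapWeight (fun i => (i.1, i.2.1)) (W.starTilt 0)

theorem mapWeight_pair_starTilt (ϑ : ℝ) :
    mapWeight (fun i => (i.1, i.2.1)) (W.starTilt ϑ) = W.starPair := by
  funext ⟨s, s'⟩
  rcases s with _ | _ | _ <;> rcases s' with _ | _ | _ <;>
    simp [starPair, mapWeight, sum_filter, Fintype.sum_prod_type, Fintype.sum_option, starTilt,
      boolSign] <;> ring

theorem starPair_mem_stdSimplex : W.starPair ∈ stdSimplex ℝ (Option Bool × Option Bool) :=
  mapWeight_mem_stdSimplex _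
    ⟨W.starTilt_nonneg ⟨le_rfl, W.θ_pos.le⟩, W.sum_starTilt 0⟩

theorem starPair_false_pos (s : Option Bool) : 0 < W.starPair (some false, s) := by
  have := W.a_pos
  have := W.t_pos
  have := W.t_le_a
  have := W.t_le_b
  rcases s with _ | _ | _ <;>
    simp [starPair, mapWeight, sum_filter, Fintype.sum_prod_type, Fintype.sum_option, starTilt,
      tripleWeight] <;> linarith

end Marginals

end TripleWeights

section TripleCorr

variable {ι Ω₁ Ω₂ Ω₃ : Type*} [Fintype ι] [DecidableEq ι] [Fintype Ω₁] [Fintype Ω₂] [Fintype Ω₃]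

theorem tripleCorr_update_sub {w : ι → Bool × Bool × Bool → ℝ} {k : ι} (hk : ∑ a, w k a = 1)
    {l l' : Bool × Bool × Bool → ℝ} {ψ : ℝ}
    (hl : ∀ i, l i - l' i = ψ * (boolSign i.1 * boolSign i.2.1 * boolSign i.2.2))
    (f g h : (ι → Bool) → ℝ) :
    tripleCorr (Function.update w k l) f g h - tripleCorr (Function.update w k l') f g h =
      ψ * tripleCorr w (boolDeriv k f) (boolDeriv k g) (boolDeriv k h) := by
  have hpull {Ω : Type} (p : Bool × Bool × Bool → Ω) (x : ι → Bool × Bool × Bool) (a) :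
      (fun j => p (Function.update x k a j)) = Function.update (fun j => p (x j)) k (p a) :=
    funext fun j => Function.apply_update (fun _ => p) x k a j
  simp only [tripleCorr, prodExp_update hk, ← sum_sub_distrib, ← sub_mul, hl, hpull Prod.fst,
    hpull fun i => i.2.1, hpull fun i => i.2.2]
  simp only [mul_assoc, ← mul_sum]
  simp only [← prodExp_const_mul, ← prodExp_sum]
  congr 1
  funext x
  simp only [boolDeriv, Fintype.sum_prod_type, Fintype.sum_bool, boolSign]
  ring

end TripleCorr

theorem abs_mul_mul_le_of_abs_le_one {τ u v z : ℝ} (hτ : 0 ≤ τ) (hu : |u| ≤ 1) (hv : |v| ≤ 1)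
    (hz : |z| ≤ 1) :
    |u * v * z| ≤ τ * (u ^ 2 + v ^ 2 + z ^ 2) +
      (if τ < |u| then 1 else 0) * (if τ < |v| then 1 else 0) := by
  rw [abs_mul, abs_mul, ← sq_abs u, ← sq_abs v, ← sq_abs z]
  have hu0 := abs_nonneg u
  have hv0 := abs_nonneg v
  have hz0 := abs_nonneg z
  generalize |u| = u at *
  generalize |v| = v at *
  generalize |z| = z at *
  have hsmall {u v : ℝ} (hv : 0 ≤ v) (huτ : u ≤ τ) :
      u * v * z ≤ τ * (u ^ 2 + v ^ 2 + z ^ 2) := by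
    calc u * v * z = u * (v * z) := mul_assoc ..
      _ ≤ τ * (v * z) := by gcongr
      _ ≤ τ * (u ^ 2 + v ^ 2 + z ^ 2) := by
        gcongr
        nlinarith [sq_nonneg u, sq_nonneg (v - z), sq_nonneg (v + z)]
  by_cases h₁ : τ < u
  · by_cases h₂ : τ < v
    · simp only [h₁, h₂, if_true, mul_one]
      have : u * v * z ≤ 1 := mul_le_one₀ (mul_le_one₀ hu hv0 hv) hz0 hz
      have : 0 ≤ τ * (u ^ 2 + v ^ 2 + z ^ 2) := by positivity
      linarith
    · simp only [h₂, if_false, mul_zero, add_zero]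
      linarith [hsmall hu0 (not_lt.1 h₂)]
  · simp only [h₁, if_false, zero_mul, add_zero]
    exact hsmall hv0 (not_lt.1 h₁)

theorem prodExp_lt_abs_le {ι Ω : Type*} [Fintype ι] [DecidableEq ι] [Fintype Ω]
    {w : ι → Ω → ℝ} (hw : ∀ k a, 0 ≤ w k a) {τ : ℝ} (hτ : 0 < τ) (F : (ι → Ω) → ℝ) :
    prodExp w (fun x => if τ < |F x| then 1 else 0) ≤ prodExp w (fun x => F x ^ 2) / τ ^ 2 := by
  rw [le_div_iff₀ (by positivity), mul_comm, ← prodExp_const_mul]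
  refine prodExp_mono hw fun x => ?_
  split_ifs with h
  · rw [mul_one, ← sq_abs (F x)]
    gcongr
  · rw [mul_zero]
    positivity

namespace TripleWeights

variable (W : TripleWeights)

theorem sum_influence_le_inv {n : ℕ} {f : (Fin n → Bool) → ℝ} (hf : ∀ x, f x ∈ Set.Icc 0 1) :
    ∑ k, influence W.q W.t k f ≤ 4 / W.t := by
  have hvar := sum_influence_le W.t_pos.le W.starWeight_mem_stdSimplex f
  have hone : prodExp (fun _ => bernoulliWeight W.q) (fun x => f x ^ 2) ≤ 1 :=
    prodExp_le_one (fun _ => ⟨fun x => (W.bernoulliWeight_pos x).le, sum_bernoulliWeight _⟩)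
      fun x => pow_le_one₀ (hf x).1 (hf x).2
  have hnonneg : 0 ≤ prodExp (fun _ => starWeight W.q W.t) (fun X => smooth f X ^ 2) :=
    prodExp_nonneg (fun _ => W.starWeight_mem_stdSimplex.1) fun X => sq_nonneg _
  rw [le_div_iff₀ W.t_pos]
  linarith

theorem influence_nonneg {n : ℕ} (k : Fin n) (f : (Fin n → Bool) → ℝ) :
    0 ≤ influence W.q W.t k f :=
  prodExp_nonneg (fun _ => W.starWeight_mem_stdSimplex.1) fun _ => sq_nonneg _

section StarExpectation

variable {n : ℕ} (ϑ : Fin n → ℝ)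

theorem prodExp_starTilt_fst (F : (Fin n → Option Bool) → ℝ) :
    prodExp (fun k => W.starTilt (ϑ k)) (fun x => F fun k => (x k).1) =
      prodExp (fun _ => starWeight W.q W.t) F := by
  simp only [prodExp_map _ (fun _ (i : Option Bool × Option Bool × Option Bool) => i.1),
    mapWeight_fst_starTilt]

theorem prodExp_starTilt_snd (F : (Fin n → Option Bool) → ℝ) :
    prodExp (fun k => W.starTilt (ϑ k)) (fun x => F fun k => (x k).2.1) =
      prodExp (fun _ => starWeight W.q W.t) F := by
  simp only [prodExp_map _ (fun _ (i : Option Bool × Option Bool × Option Bool) => i.2.1),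
    mapWeight_snd_starTilt]

theorem prodExp_starTilt_trd (F : (Fin n → Option Bool) → ℝ) :
    prodExp (fun k => W.starTilt (ϑ k)) (fun x => F fun k => (x k).2.2) =
      prodExp (fun _ => starWeight W.q W.t) F := by
  simp only [prodExp_map _ (fun _ (i : Option Bool × Option Bool × Option Bool) => i.2.2),
    mapWeight_trd_starTilt]

theorem prodExp_starTilt_pair (F : (Fin n → Option Bool × Option Bool) → ℝ) :
    prodExp (fun k => W.starTilt (ϑ k)) (fun x => F fun k => ((x k).1, (x k).2.1)) =
      prodExp (fun _ => W.starPair) F := by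
  simp only [prodExp_map _ (fun _ (i : Option Bool × Option Bool × Option Bool) => (i.1, i.2.1)),
    mapWeight_pair_starTilt]

theorem prodExp_starTilt_mul_le {ω η : ℝ} (hexp : SmallSetExpanding W.starPair ω η)
    {F G : (Fin n → Option Bool) → ℝ} (hF : ∀ x, F x ∈ Set.Icc 0 1) (hG : ∀ x, G x ∈ Set.Icc 0 1)
    (hη : prodExp (fun _ => starWeight W.q W.t) G ≤ η) :
    prodExp (fun k => W.starTilt (ϑ k)) (fun x => F (fun k => (x k).1) * G (fun k => (x k).2.1)) ≤
      ω * (prodExp (fun _ => starWeight W.q W.t) F + prodExp (fun _ => starWeight W.q W.t) G) := by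
  have hfst := W.prodExp_starTilt_pair ϑ fun x => F fun k => (x k).1
  have hsnd := W.prodExp_starTilt_pair ϑ fun x => G fun k => (x k).2
  have hmul := W.prodExp_starTilt_pair ϑ fun x => F (fun k => (x k).1) * G fun k => (x k).2
  rw [W.prodExp_starTilt_fst ϑ F] at hfst
  rw [W.prodExp_starTilt_snd ϑ G] at hsnd
  rw [hfst, hsnd, hmul]
  exact hexp n F G hF hG (hsnd ▸ hη)

end StarExpectation

section Lindeberg

variable {n : ℕ}

theorem abs_tripleCorr_boolDeriv_le {τ η : ℝ} (hτ : 0 < τ)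
    (hexp : SmallSetExpanding W.starPair (τ ^ 3) η) {ϑ : Fin n → ℝ}
    (hϑ : ∀ k, ϑ k ∈ Set.Icc 0 W.θ) {f g h : (Fin n → Bool) → ℝ} (hf : ∀ x, f x ∈ Set.Icc 0 1)
    (hg : ∀ x, g x ∈ Set.Icc 0 1) (hh : ∀ x, h x ∈ Set.Icc 0 1) {k : Fin n}
    (hk : influence W.q W.t k g ≤ η * τ ^ 2) :
    |tripleCorr (fun j => W.tilt (ϑ j)) (boolDeriv k f) (boolDeriv k g) (boolDeriv k h)| ≤
      2 * τ * (influence W.q W.t k f + influence W.q W.t k g + influence W.q W.t k h) := by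
  have hw (j : Fin n) (i) : 0 ≤ W.starTilt (ϑ j) i := W.starTilt_nonneg (hϑ j) i
  let large (u : (Fin n → Bool) → ℝ) (X : Fin n → Option Bool) : ℝ :=
    if τ < |smooth (boolDeriv k u) X| then 1 else 0
  have hlarge (u X) : large u X ∈ Set.Icc 0 1 := by
    simp only [large]
    split_ifs <;> norm_num
  have hmarkov (u) : prodExp (fun _ => starWeight W.q W.t) (large u) ≤
      influence W.q W.t k u / τ ^ 2 :=
    prodExp_lt_abs_le (fun _ => W.starWeight_mem_stdSimplex.1) hτ _
  have hsmooth {u : (Fin n → Bool) → ℝ} (hu : ∀ x, u x ∈ Set.Icc 0 1) (X) :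
      |smooth (boolDeriv k u) X| ≤ 1 :=
    abs_smooth_le_one (abs_boolDeriv_le_one k hu) X
  have hpair := W.prodExp_starTilt_mul_le ϑ hexp (hlarge f) (hlarge g)
    ((hmarkov g).trans ((div_le_iff₀ (by positivity)).2 hk))
  have hbound := (abs_prodExp_le hw _).trans <| prodExp_mono hw fun x =>
    abs_mul_mul_le_of_abs_le_one hτ.le (hsmooth hf fun j => (x j).1)
      (hsmooth hg fun j => (x j).2.1) (hsmooth hh fun j => (x j).2.2)
  rw [← W.tripleCorr_smooth]
  refine hbound.trans ?_
  rw [prodExp_add, prodExp_const_mul, prodExp_add, prodExp_add,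
    W.prodExp_starTilt_fst ϑ fun X => smooth (boolDeriv k f) X ^ 2,
    W.prodExp_starTilt_snd ϑ fun X => smooth (boolDeriv k g) X ^ 2,
    W.prodExp_starTilt_trd ϑ fun X => smooth (boolDeriv k h) X ^ 2]
  have hcancel : τ ^ 3 * (influence W.q W.t k f / τ ^ 2 + influence W.q W.t k g / τ ^ 2) =
      τ * (influence W.q W.t k f + influence W.q W.t k g) := by field_simp
  have hh0 := mul_nonneg hτ.le (W.influence_nonneg k h)
  have hlast := mul_le_mul_of_nonneg_left (add_le_add (hmarkov f) (hmarkov g))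
    (pow_pos hτ 3).le
  calc _ ≤ τ * (influence W.q W.t k f + influence W.q W.t k g + influence W.q W.t k h) +
        τ * (influence W.q W.t k f + influence W.q W.t k g) :=
        add_le_add le_rfl (hpair.trans (hlast.trans_eq hcancel))
    _ ≤ _ := by linarith

theorem abs_tripleCorr_piecewise_sub_le {τ η : ℝ} (hτ : 0 < τ)
    (hexp : SmallSetExpanding W.starPair (τ ^ 3) η) {f g h : (Fin n → Bool) → ℝ}
    (hf : ∀ x, f x ∈ Set.Icc 0 1) (hg : ∀ x, g x ∈ Set.Icc 0 1) (hh : ∀ x, h x ∈ Set.Icc 0 1)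
    (U : Finset (Fin n)) (hU : ∀ k ∈ U, influence W.q W.t k g ≤ η * τ ^ 2) :
    |tripleCorr (U.piecewise (fun _ => W.tilt W.θ) fun _ => W.base) f g h -
        tripleCorr (fun _ => W.base) f g h| ≤
      W.θ * ∑ k ∈ U, 2 * τ *
        (influence W.q W.t k f + influence W.q W.t k g + influence W.q W.t k h) := by
  induction U using Finset.induction_on with
  | empty => simp
  | insert k U hk ih =>
    let w : Fin n → Bool × Bool × Bool → ℝ := U.piecewise (fun _ => W.tilt W.θ) fun _ => W.base
    have hwk : w k = W.base := piecewise_eq_of_notMem _ _ _ hk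
    have hw : (fun j => W.tilt (if j ∈ U then W.θ else 0)) = w := by
      funext j
      by_cases hj : j ∈ U <;> simp [w, hj, tilt_zero]
    have hdiff : tripleCorr (Function.update w k (W.tilt W.θ)) f g h - tripleCorr w f g h =
        W.θ * tripleCorr w (boolDeriv k f) (boolDeriv k g) (boolDeriv k h) := by
      have h := tripleCorr_update_sub (w := w) (k := k) (l := W.tilt W.θ) (l' := w k) (ψ := W.θ)
        (by rw [hwk]; exact W.base_mem_stdSimplex.2)
        (fun i => by rw [hwk]; exact add_sub_cancel_left _ _) f g h
      rwa [Function.update_eq_self] at h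
    have hstep := W.abs_tripleCorr_boolDeriv_le hτ hexp (ϑ := fun j => if j ∈ U then W.θ else 0)
      (fun j => by split_ifs <;> simp [W.θ_pos.le]) hf hg hh (hU k (mem_insert_self k U))
    rw [sum_insert hk, mul_add, piecewise_insert]
    refine (abs_sub_le _ (tripleCorr w f g h) _).trans
      (add_le_add ?_ (ih fun j hj => hU j (mem_insert_of_mem hj)))
    rw [hdiff, abs_mul, abs_of_pos W.θ_pos, ← hw]
    exact mul_le_mul_of_nonneg_left hstep W.θ_pos.le

-- Small-set expansion is needed with `ω = τ ^ 3` because a derivative exceeds `τ` on a set of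
-- measure at most its influence divided by `τ ^ 2`.
theorem exists_abs_tripleCorr_piecewise_sub_le {η : ℝ} (hη : 0 < η) :
    ∃ η₀ > 0, ∀ (n : ℕ) (f g h : (Fin n → Bool) → ℝ), (∀ x, f x ∈ Set.Icc 0 1) →
      (∀ x, g x ∈ Set.Icc 0 1) → (∀ x, h x ∈ Set.Icc 0 1) → ∀ J : Finset (Fin n),
      (∀ k ∉ J, influence W.q W.t k g ≤ η₀) →
      |tripleCorr (J.piecewise (fun _ => W.base) fun _ => W.tilt W.θ) f g h -
        tripleCorr (fun _ => W.base) f g h| ≤ η := by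
  have hθ := W.θ_pos
  have ht := W.t_pos
  obtain ⟨τ, hτ, hτη⟩ : ∃ τ > 0, W.θ * (2 * τ * (4 / W.t + 4 / W.t + 4 / W.t)) = η :=
    ⟨η * W.t / (24 * W.θ), by positivity, by field_simp; ring⟩
  obtain ⟨η₁, hη₁, hexp⟩ := exists_smallSetExpanding W.starPair_mem_stdSimplex
    (fun s s' => ⟨some false, W.starPair_false_pos s, W.starPair_false_pos s'⟩)
    (show 0 < τ ^ 3 by positivity)
  refine ⟨η₁ * τ ^ 2, by positivity, fun n f g h hf hg hh J hJ => ?_⟩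
  have hJc := W.abs_tripleCorr_piecewise_sub_le hτ hexp hf hg hh Jᶜ fun k hk =>
    hJ k (mem_compl.1 hk)
  rw [piecewise_compl] at hJc
  refine hJc.trans (le_of_le_of_eq ?_ hτη)
  rw [← mul_sum]
  gcongr
  refine (sum_le_univ_sum_of_nonneg fun k => add_nonneg (add_nonneg (W.influence_nonneg k f)
    (W.influence_nonneg k g)) (W.influence_nonneg k h)).trans ?_
  rw [sum_add_distrib, sum_add_distrib]
  exact add_le_add (add_le_add (W.sum_influence_le_inv hf) (W.sum_influence_le_inv hg))
    (W.sum_influence_le_inv hh)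

end Lindeberg

end TripleWeights

section Restriction

variable {ι : Type*} [DecidableEq ι]

/-- The restriction of a function on the cube by fixing the coordinates in `J` as in `α`; it does
not depend on its argument's coordinates in `J`. -/
def fixOn (J : Finset ι) (α : ι → Bool) (f : (ι → Bool) → ℝ) (v : ι → Bool) : ℝ :=
  f (J.piecewise α v)

theorem fixOn_piecewise (J : Finset ι) (α β : ι → Bool) (f : (ι → Bool) → ℝ) :
    fixOn J (J.piecewise α β) f = fixOn J α f := by
  funext v
  rw [fixOn, piecewise_idem_left, fixOn]

theorem piecewise_comp {Ω Ω' : Type*} (p : Ω → Ω') (J : Finset ι) (u v : ι → Ω) :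
    (fun k => p (J.piecewise u v k)) = J.piecewise (fun k => p (u k)) fun k => p (v k) := by
  funext k
  simp only [Finset.piecewise, apply_ite p]

theorem tripleCorr_piecewise [Fintype ι] {w₁ w₂ : ι → Bool × Bool × Bool → ℝ}
    (h₁ : ∀ k, ∑ i, w₁ k i = 1) (h₂ : ∀ k, ∑ i, w₂ k i = 1) (J : Finset ι)
    (f g h : (ι → Bool) → ℝ) :
    tripleCorr (J.piecewise w₁ w₂) f g h = prodExp w₁ fun u =>
      tripleCorr w₂ (fixOn J (fun k => (u k).1) f) (fixOn J (fun k => (u k).2.1) g)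
        (fixOn J (fun k => (u k).2.2) h) := by
  simp only [tripleCorr, fixOn, prodExp_piecewise h₁ h₂,
    piecewise_comp fun i : Bool × Bool × Bool => i.1,
    piecewise_comp fun i : Bool × Bool × Bool => i.2.1,
    piecewise_comp fun i : Bool × Bool × Bool => i.2.2]

end Restriction

section BiasedMean

variable {ι : Type*} [Fintype ι] [DecidableEq ι]

/-- The mean of `f` under the product of the Bernoulli laws of parameter `q`. -/
def biasedMean (q : ℝ) (f : (ι → Bool) → ℝ) : ℝ :=
  prodExp (fun _ => bernoulliWeight q) f

theorem biasedMean_one_sub (q : ℝ) (f : (ι → Bool) → ℝ) :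
    biasedMean q (fun x => 1 - f x) = 1 - biasedMean q f :=
  prodExp_one_sub (fun _ => sum_bernoulliWeight q) f

end BiasedMean

namespace TripleWeights

variable (W : TripleWeights)

section Correlation

variable {n : ℕ} {f g h : (Fin n → Bool) → ℝ}

theorem biasedMean_mem_Icc (hf : ∀ x, f x ∈ Set.Icc 0 1) : biasedMean W.q f ∈ Set.Icc 0 1 :=
  have hq (b : Bool) : 0 ≤ bernoulliWeight W.q b := (W.bernoulliWeight_pos b).le
  ⟨prodExp_nonneg (fun _ => hq) fun x => (hf x).1,
    prodExp_le_one (fun _ => ⟨hq, sum_bernoulliWeight _⟩) fun x => (hf x).2⟩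

/-- The correlation of three functions along the three components of the law `W.tilt ϑ`. -/
def corr (ϑ : ℝ) (f g h : (Fin n → Bool) → ℝ) : ℝ :=
  tripleCorr (fun _ => W.tilt ϑ) f g h

/-- The law of the first two components of `W.tilt ϑ`, which does not depend on `ϑ`. -/
def pairLaw : Bool × Bool → ℝ :=
  mapWeight (fun i => (i.1, i.2.1)) (W.tilt 0)

/-- The correlation of two functions along the components of `W.pairLaw`. -/
def pairCorr (f g : (Fin n → Bool) → ℝ) : ℝ :=
  prodExp (fun _ => W.pairLaw) fun x => f (fun k => (x k).1) * g (fun k => (x k).2)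

/-- The measure of the violations of transitivity by `f`, `g`, `h`: the probability that exactly
two of three `{0,1}`-valued functions take the value `1`. -/
def defect (ϑ : ℝ) (f g h : (Fin n → Bool) → ℝ) : ℝ :=
  W.corr ϑ f g (fun x => 1 - h x) + W.corr ϑ f (fun x => 1 - g x) h +
    W.corr ϑ (fun x => 1 - f x) g h

theorem mapWeight_swap_tilt (ϑ : ℝ) :
    mapWeight (fun i => (i.2.1, i.1, i.2.2)) (W.tilt ϑ) = W.tilt ϑ := by
  funext i
  rcases i with ⟨_ | _, _ | _, _ | _⟩ <;>
    simp [mapWeight, sum_filter, Fintype.sum_prod_type, tilt, base, tripleWeight, boolSign]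

theorem mapWeight_rotate_tilt (ϑ : ℝ) :
    mapWeight (fun i => (i.2.1, i.2.2, i.1)) (W.tilt ϑ) = W.tilt ϑ := by
  funext i
  rcases i with ⟨_ | _, _ | _, _ | _⟩ <;>
    simp [mapWeight, sum_filter, Fintype.sum_prod_type, tilt, base, tripleWeight, boolSign]

theorem mapWeight_pair_tilt (ϑ : ℝ) :
    mapWeight (fun i => (i.1, i.2.1)) (W.tilt ϑ) = W.pairLaw := by
  funext i
  rcases i with ⟨_ | _, _ | _⟩ <;>
    simp [pairLaw, mapWeight, sum_filter, Fintype.sum_prod_type, tilt, boolSign] <;> ring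

theorem mapWeight_fst_pairLaw : mapWeight Prod.fst W.pairLaw = bernoulliWeight W.q := by
  funext x
  have := W.sum_eq_one
  cases x <;>
    simp [pairLaw, mapWeight, sum_filter, Fintype.sum_prod_type, tilt, base, tripleWeight,
      bernoulliWeight, q] <;> linarith

theorem mapWeight_swap_pairLaw : mapWeight Prod.swap W.pairLaw = W.pairLaw := by
  funext i
  rcases i with ⟨_ | _, _ | _⟩ <;>
    simp [pairLaw, mapWeight, sum_filter, Fintype.sum_prod_type, tilt, base, tripleWeight]

theorem pairLaw_pos (i : Bool × Bool) : 0 < W.pairLaw i := by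
  have := W.a_pos
  have := W.b_pos
  have := W.c_pos
  rcases i with ⟨_ | _, _ | _⟩ <;>
    simp [pairLaw, mapWeight, sum_filter, Fintype.sum_prod_type, tilt, base, tripleWeight] <;>
    linarith

theorem pairLaw_mem_stdSimplex : W.pairLaw ∈ stdSimplex ℝ (Bool × Bool) :=
  mapWeight_mem_stdSimplex _ (W.tilt_zero ▸ W.base_mem_stdSimplex)

theorem corr_swap (ϑ : ℝ) (f g h : (Fin n → Bool) → ℝ) : W.corr ϑ g f h = W.corr ϑ f g h := by
  have hmap := prodExp_map (fun _ : Fin n => W.tilt ϑ) (fun _ i => (i.2.1, i.1, i.2.2)) fun x =>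
    f (fun k => (x k).1) * g (fun k => (x k).2.1) * h (fun k => (x k).2.2)
  simp only [mapWeight_swap_tilt] at hmap
  rw [corr, corr, tripleCorr, tripleCorr, ← hmap]
  simp only [mul_comm (g _)]

theorem corr_rotate (ϑ : ℝ) (f g h : (Fin n → Bool) → ℝ) : W.corr ϑ g h f = W.corr ϑ f g h := by
  have hmap := prodExp_map (fun _ : Fin n => W.tilt ϑ) (fun _ i => (i.2.1, i.2.2, i.1)) fun x =>
    g (fun k => (x k).1) * h (fun k => (x k).2.1) * f (fun k => (x k).2.2)
  simp only [mapWeight_rotate_tilt] at hmap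
  rw [corr, corr, tripleCorr, tripleCorr, ← hmap]
  simp only [mul_rotate (f _)]

theorem corr_one_right (ϑ : ℝ) (f g : (Fin n → Bool) → ℝ) :
    W.corr ϑ f g (fun _ => 1) = W.pairCorr f g := by
  simp only [corr, tripleCorr, pairCorr, mul_one, ← W.mapWeight_pair_tilt ϑ]
  exact prodExp_map (fun _ => W.tilt ϑ) (fun _ i => (i.1, i.2.1)) fun x =>
    f (fun k => (x k).1) * g (fun k => (x k).2)

theorem pairCorr_one_right (f : (Fin n → Bool) → ℝ) :
    W.pairCorr f (fun _ => 1) = biasedMean W.q f := by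
  simp only [pairCorr, biasedMean, mul_one, ← W.mapWeight_fst_pairLaw]
  exact prodExp_map (fun _ => W.pairLaw) (fun _ => Prod.fst) f

theorem pairCorr_comm (f g : (Fin n → Bool) → ℝ) : W.pairCorr g f = W.pairCorr f g := by
  have hmap := prodExp_map (fun _ : Fin n => W.pairLaw) (fun _ => Prod.swap) fun x =>
    f (fun k => (x k).1) * g (fun k => (x k).2)
  simp only [mapWeight_swap_pairLaw, Prod.fst_swap, Prod.snd_swap] at hmap
  rw [pairCorr, pairCorr, ← hmap]
  simp only [mul_comm (g _)]

theorem defect_rotate (ϑ : ℝ) (f g h : (Fin n → Bool) → ℝ) :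
    W.defect ϑ g h f = W.defect ϑ f g h := by
  simp only [defect, W.corr_rotate ϑ f, W.corr_rotate ϑ fun x => 1 - f x]
  ring

theorem corr_add_corr_one_sub (ϑ : ℝ) (f g h : (Fin n → Bool) → ℝ) :
    W.corr ϑ f g h + W.corr ϑ f g (fun x => 1 - h x) = W.pairCorr f g := by
  rw [← W.corr_one_right ϑ, corr, corr, corr, tripleCorr, tripleCorr, tripleCorr, ← prodExp_add]
  simp only [mul_sub, add_sub_cancel]

theorem pairCorr_add_pairCorr_one_sub (f g : (Fin n → Bool) → ℝ) :
    W.pairCorr f g + W.pairCorr f (fun x => 1 - g x) = biasedMean W.q f := by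
  rw [← W.pairCorr_one_right, pairCorr, pairCorr, pairCorr, ← prodExp_add]
  simp only [mul_sub, add_sub_cancel]

theorem pairCorr_le_left (hf : ∀ x, 0 ≤ f x) (hg : ∀ x, g x ≤ 1) :
    W.pairCorr f g ≤ biasedMean W.q f := by
  rw [← pairCorr_one_right]
  exact prodExp_mono (fun _ => W.pairLaw_mem_stdSimplex.1) fun _ =>
    mul_le_mul_of_nonneg_left (hg _) (hf _)

theorem pairCorr_le_right (hf : ∀ x, f x ≤ 1) (hg : ∀ x, 0 ≤ g x) :
    W.pairCorr f g ≤ biasedMean W.q g :=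
  W.pairCorr_comm f g ▸ W.pairCorr_le_left hg hf

end Correlation

end TripleWeights

theorem fixOn_one_sub {ι : Type*} [DecidableEq ι] (J : Finset ι) (α : ι → Bool)
    (f : (ι → Bool) → ℝ) :
    fixOn J α (fun x => 1 - f x) = fun x => 1 - fixOn J α f x :=
  rfl

namespace TripleWeights

variable (W : TripleWeights) {n : ℕ} {f g h : (Fin n → Bool) → ℝ}

section ReverseHypercontractivity

theorem corr_one_one_right (ϑ : ℝ) (f : (Fin n → Bool) → ℝ) :
    W.corr ϑ f (fun _ => 1) (fun _ => 1) = biasedMean W.q f := by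
  rw [corr_one_right, pairCorr_one_right]

theorem corr_nonneg {ϑ : ℝ} (hϑ : ∀ i, 0 ≤ W.tilt ϑ i) (hf : ∀ x, f x ∈ Set.Icc 0 1)
    (hg : ∀ x, g x ∈ Set.Icc 0 1) (hh : ∀ x, h x ∈ Set.Icc 0 1) : 0 ≤ W.corr ϑ f g h :=
  prodExp_nonneg (fun _ => hϑ) fun _ =>
    mul_nonneg (mul_nonneg (hf _).1 (hg _).1) (hh _).1

theorem defect_nonneg {ϑ : ℝ} (hϑ : ∀ i, 0 ≤ W.tilt ϑ i) (hf : ∀ x, f x ∈ Set.Icc 0 1)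
    (hg : ∀ x, g x ∈ Set.Icc 0 1) (hh : ∀ x, h x ∈ Set.Icc 0 1) : 0 ≤ W.defect ϑ f g h :=
  add_nonneg (add_nonneg (W.corr_nonneg hϑ hf hg fun x => Set.Icc.one_sub_mem (hh x))
    (W.corr_nonneg hϑ hf (fun x => Set.Icc.one_sub_mem (hg x)) hh))
    (W.corr_nonneg hϑ (fun x => Set.Icc.one_sub_mem (hf x)) hg hh)

theorem corr_one_sub_right_le_defect {ϑ : ℝ} (hϑ : ∀ i, 0 ≤ W.tilt ϑ i)
    (hf : ∀ x, f x ∈ Set.Icc 0 1) (hg : ∀ x, g x ∈ Set.Icc 0 1) (hh : ∀ x, h x ∈ Set.Icc 0 1) :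
    W.corr ϑ f g (fun x => 1 - h x) ≤ W.defect ϑ f g h := by
  have hg' := W.corr_nonneg hϑ hf (fun x => Set.Icc.one_sub_mem (hg x)) hh
  have hf' := W.corr_nonneg hϑ (fun x => Set.Icc.one_sub_mem (hf x)) hg hh
  rw [defect]
  linarith

variable {A : ℕ}

theorem pow_mul_biasedMean_le_corr (hA : 1 ≤ A) (hrev : RevHypercontractive A (W.tilt W.θ))
    (hf : ∀ x, f x ∈ Set.Icc 0 1) (hg : ∀ x, g x ∈ Set.Icc 0 1) (hh : ∀ x, h x ∈ Set.Icc 0 1) :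
    (biasedMean W.q f * biasedMean W.q g * biasedMean W.q h) ^ A ≤ W.corr W.θ f g h := by
  have hfst := W.corr_one_one_right W.θ f
  have hsnd := (W.corr_swap _ _ _ _).trans (W.corr_one_one_right W.θ g)
  have htrd := (W.corr_rotate _ _ _ _).trans (W.corr_one_one_right W.θ h)
  simp only [corr, tripleCorr, mul_one, one_mul] at hfst hsnd htrd
  have htensor := RevHypercontractive.tensor (w := fun _ : Fin n => W.tilt W.θ)
    (fun _ i => (W.tilt_pos i).le) (fun _ => hrev) (fun x => (hf x).1) (fun x => (hg x).1)
    fun x => (hh x).1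
  rw [hfst, hsnd, htrd] at htensor
  refine htensor.trans (prodExp_mono (fun _ i => (W.tilt_pos i).le) fun x => ?_)
  have hmem := unitInterval.mul_mem (unitInterval.mul_mem (hf fun k => (x k).1)
    (hg fun k => (x k).2.1)) (hh fun k => (x k).2.2)
  exact pow_le_of_le_one hmem.1 hmem.2 (by omega)

theorem pow_mul_biasedMean_le_pairCorr (hA : 1 ≤ A)
    (hrev : RevHypercontractive A (W.tilt W.θ)) (hf : ∀ x, f x ∈ Set.Icc 0 1)
    (hg : ∀ x, g x ∈ Set.Icc 0 1) :
    (biasedMean W.q f * biasedMean W.q g) ^ A ≤ W.pairCorr f g := by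
  have hone : biasedMean W.q (fun _ : Fin n → Bool => 1) = 1 :=
    prodExp_const (fun _ => sum_bernoulliWeight _) 1
  have h := W.pow_mul_biasedMean_le_corr hA hrev hf hg fun _ => unitInterval.one_mem
  rwa [hone, mul_one, corr_one_right] at h

theorem one_sub_le_biasedMean_of_corr_lt (hA : 1 ≤ A) (hrev : RevHypercontractive A (W.tilt W.θ))
    (hf : ∀ x, f x ∈ Set.Icc 0 1) (hg : ∀ x, g x ∈ Set.Icc 0 1) (hh : ∀ x, h x ∈ Set.Icc 0 1)
    {c e : ℝ} (hc : 0 ≤ c) (he : 0 ≤ e) (hcf : c ≤ biasedMean W.q f) (hcg : c ≤ biasedMean W.q g)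
    (hcorr : W.corr W.θ f g (fun x => 1 - h x) < (c * c * e) ^ A) : 1 - e ≤ biasedMean W.q h := by
  have hpow := W.pow_mul_biasedMean_le_corr hA hrev hf hg fun x => Set.Icc.one_sub_mem (hh x)
  rw [biasedMean_one_sub] at hpow
  contrapose! hcorr
  refine le_trans ?_ hpow
  gcongr
  · exact mul_nonneg (hc.trans hcf) (hc.trans hcg)
  · exact hc.trans hcf
  · exact (lt_sub_comm.1 hcorr).le

theorem one_sub_le_biasedMean_of_defect_lt (hA : 1 ≤ A)
    (hrev : RevHypercontractive A (W.tilt W.θ)) (hf : ∀ x, f x ∈ Set.Icc 0 1)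
    (hg : ∀ x, g x ∈ Set.Icc 0 1) (hh : ∀ x, h x ∈ Set.Icc 0 1) {c e : ℝ} (hc : 0 ≤ c)
    (he : 0 ≤ e) (hce : c ≤ 1 - e) (hpair : c ≤ W.pairCorr f g)
    (hdefect : W.defect W.θ f g h < (c * c * e) ^ A) :
    1 - e ≤ biasedMean W.q f ∧ 1 - e ≤ biasedMean W.q g ∧ 1 - e ≤ biasedMean W.q h := by
  have hle {f g h : (Fin n → Bool) → ℝ} := W.corr_one_sub_right_le_defect
    (f := f) (g := g) (h := h) fun i => (W.tilt_pos i).le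
  have hcf := hpair.trans (W.pairCorr_le_left (fun x => (hf x).1) fun x => (hg x).2)
  have hcg := hpair.trans (W.pairCorr_le_right (fun x => (hf x).2) fun x => (hg x).1)
  have hh' := W.one_sub_le_biasedMean_of_corr_lt hA hrev hf hg hh hc he hcf hcg
    ((hle hf hg hh).trans_lt hdefect)
  have hch := hce.trans hh'
  rw [← defect_rotate] at hdefect
  have hf' := W.one_sub_le_biasedMean_of_corr_lt hA hrev hg hh hf hc he hcg hch
    ((hle hg hh hf).trans_lt hdefect)
  rw [← defect_rotate] at hdefect
  have hg' := W.one_sub_le_biasedMean_of_corr_lt hA hrev hh hf hg hc he hch hcf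
    ((hle hh hf hg).trans_lt hdefect)
  exact ⟨hf', hg', hh'⟩

end ReverseHypercontractivity

section Regularity

theorem card_filter_lt_influence_le {η₀ : ℝ} (hη₀ : 0 < η₀) (hf : ∀ x, f x ∈ Set.Icc 0 1) :
    #{k | η₀ < influence W.q W.t k f} ≤ ⌊4 / (W.t * η₀)⌋₊ := by
  refine Nat.le_floor ?_
  rw [← div_div, le_div_iff₀ hη₀]
  calc (#{k | η₀ < influence W.q W.t k f} : ℝ) * η₀
      = ∑ k with η₀ < influence W.q W.t k f, η₀ := by rw [sum_const, nsmul_eq_mul]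
    _ ≤ ∑ k with η₀ < influence W.q W.t k f, influence W.q W.t k f :=
        sum_le_sum fun k hk => (mem_filter.1 hk).2.le
    _ ≤ ∑ k, influence W.q W.t k f :=
        sum_le_univ_sum_of_nonneg fun k => W.influence_nonneg k f
    _ ≤ 4 / W.t := W.sum_influence_le_inv hf

theorem exists_prodExp_defect_fixOn_le {η : ℝ} (hη : 0 < η) :
    ∃ N : ℕ, ∀ (n : ℕ) (f g h : (Fin n → Bool) → ℝ), (∀ x, f x ∈ Set.Icc 0 1) →
      (∀ x, g x ∈ Set.Icc 0 1) → (∀ x, h x ∈ Set.Icc 0 1) → ∃ J : Finset (Fin n), #J ≤ N ∧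
      prodExp (fun _ => W.base) (fun u => W.defect W.θ (fixOn J (fun k => (u k).1) f)
        (fixOn J (fun k => (u k).2.1) g) (fixOn J (fun k => (u k).2.2) h)) ≤
      W.defect 0 f g h + 3 * η := by
  obtain ⟨η₀, hη₀, hinvariance⟩ := W.exists_abs_tripleCorr_piecewise_sub_le hη
  refine ⟨⌊4 / (W.t * η₀)⌋₊, fun n f g h hf hg hh => ?_⟩
  let J : Finset (Fin n) := {k | η₀ < influence W.q W.t k g}
  refine ⟨J, W.card_filter_lt_influence_le hη₀ hg, ?_⟩
  have haverage {f g h : (Fin n → Bool) → ℝ} (hf : ∀ x, f x ∈ Set.Icc 0 1)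
      (hg : ∀ x, g x ∈ Set.Icc 0 1) (hh : ∀ x, h x ∈ Set.Icc 0 1)
      (hJ : ∀ k ∉ J, influence W.q W.t k g ≤ η₀) :
      prodExp (fun _ => W.base) (fun u => W.corr W.θ (fixOn J (fun k => (u k).1) f)
        (fixOn J (fun k => (u k).2.1) g) (fixOn J (fun k => (u k).2.2) h)) ≤
      W.corr 0 f g h + η := by
    have hclose := (abs_le.1 (hinvariance n f g h hf hg hh J hJ)).2
    rw [tripleCorr_piecewise (fun _ => W.base_mem_stdSimplex.2) fun _ => W.sum_tilt _] at hclose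
    simp only [corr, tilt_zero]
    linarith
  have hJ (k) (hk : k ∉ J) : influence W.q W.t k g ≤ η₀ := by simpa [J] using hk
  have hh' := haverage hf hg (fun x => Set.Icc.one_sub_mem (hh x)) hJ
  have hg' := haverage hf (fun x => Set.Icc.one_sub_mem (hg x)) hh fun k hk => by
    rw [influence_one_sub]
    exact hJ k hk
  have hf' := haverage (fun x => Set.Icc.one_sub_mem (hf x)) hg hh hJ
  simp only [fixOn_one_sub] at hf' hg' hh'
  simp only [defect, prodExp_add]
  linarith

theorem prodExp_pairCorr_fixOn (J : Finset (Fin n)) (f g : (Fin n → Bool) → ℝ) :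
    prodExp (fun _ => W.base) (fun u =>
      W.pairCorr (fixOn J (fun k => (u k).1) f) (fixOn J (fun k => (u k).2.1) g)) =
      W.pairCorr f g := by
  have hsum (_ : Fin n) : ∑ i, W.base i = 1 := W.base_mem_stdSimplex.2
  have h := tripleCorr_piecewise hsum hsum J f g fun _ => 1
  rw [piecewise_same] at h
  simp only [← W.corr_one_right 0, corr, tilt_zero]
  exact h.symm

theorem exists_pairCorr_fixOn_ge {c D : ℝ} (hc : 0 < c) (hD : 0 < D) :
    ∃ N : ℕ, ∀ (n : ℕ) (f g h : (Fin n → Bool) → ℝ), (∀ x, f x ∈ Set.Icc 0 1) →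
      (∀ x, g x ∈ Set.Icc 0 1) → (∀ x, h x ∈ Set.Icc 0 1) → 4 * c ≤ W.pairCorr f g →
      W.defect 0 f g h ≤ c * D / 2 → ∃ J : Finset (Fin n), #J ≤ N ∧
      ∃ u : Fin n → Bool × Bool × Bool, (∀ k, 0 < W.base (u k)) ∧
        c ≤ W.pairCorr (fixOn J (fun k => (u k).1) f) (fixOn J (fun k => (u k).2.1) g) ∧
        W.defect W.θ (fixOn J (fun k => (u k).1) f) (fixOn J (fun k => (u k).2.1) g)
          (fixOn J (fun k => (u k).2.2) h) < D := by
  obtain ⟨N, hN⟩ := W.exists_prodExp_defect_fixOn_le (show 0 < c * D / 2 by positivity)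
  refine ⟨N, fun n f g h hf hg hh hpair hdefect => ?_⟩
  obtain ⟨J, hJN, hJ⟩ := hN n f g h hf hg hh
  obtain ⟨u, hu, hgood⟩ := exists_pos_of_prodExp_pos (w := fun _ : Fin n => W.base)
    (F := fun u => (W.pairCorr (fixOn J (fun k => (u k).1) f) (fixOn J (fun k => (u k).2.1) g) - c)
      - D⁻¹ * W.defect W.θ (fixOn J (fun k => (u k).1) f) (fixOn J (fun k => (u k).2.1) g)
        (fixOn J (fun k => (u k).2.2) h)) (fun _ => W.base_mem_stdSimplex.1) (by
    have hcancel : D⁻¹ * (c * D / 2 + 3 * (c * D / 2)) = 2 * c := by field_simp; ring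
    have hmean := mul_le_mul_of_nonneg_left (hJ.trans (add_le_add_left hdefect _))
      (inv_nonneg.2 hD.le)
    rw [prodExp_sub, prodExp_sub, prodExp_const (fun _ => W.base_mem_stdSimplex.2),
      prodExp_const_mul, prodExp_pairCorr_fixOn]
    linarith)
  have hf' (x) : fixOn J (fun k => (u k).1) f x ∈ Set.Icc 0 1 := hf _
  have hg' (x) : fixOn J (fun k => (u k).2.1) g x ∈ Set.Icc 0 1 := hg _
  have hh' (x) : fixOn J (fun k => (u k).2.2) h x ∈ Set.Icc 0 1 := hh _
  have hnonneg := mul_nonneg (inv_nonneg.2 hD.le)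
    (W.defect_nonneg (fun i => (W.tilt_pos i).le) hf' hg' hh')
  have hle_one := (W.pairCorr_le_left (fun x => (hf' x).1) fun x => (hg' x).2).trans
    (W.biasedMean_mem_Icc hf').2
  refine ⟨J, hJN, u, hu, by linarith, ?_⟩
  rw [← mul_one D, ← inv_mul_lt_iff₀ hD]
  linarith

theorem exists_biasedMean_fixOn_ge {ε e : ℝ} (hε : 0 < ε) (he : 0 < e) (he' : e ≤ 1 / 2) :
    ∃ N : ℕ, ∃ δ > 0, ∀ (n : ℕ) (f g h : (Fin n → Bool) → ℝ), (∀ x, f x ∈ Set.Icc 0 1) →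
      (∀ x, g x ∈ Set.Icc 0 1) → (∀ x, h x ∈ Set.Icc 0 1) → ε ≤ biasedMean W.q f →
      ε ≤ biasedMean W.q g → W.defect 0 f g h ≤ δ → ∃ J : Finset (Fin n), #J ≤ N ∧
      ∃ u : Fin n → Bool × Bool × Bool, (∀ k, 0 < W.base (u k)) ∧
        1 - e ≤ biasedMean W.q (fixOn J (fun k => (u k).1) f) ∧
        1 - e ≤ biasedMean W.q (fixOn J (fun k => (u k).2.1) g) ∧
        1 - e ≤ biasedMean W.q (fixOn J (fun k => (u k).2.2) h) := by
  obtain ⟨A, hA, hrev⟩ := exists_revHypercontractive W.tilt_pos (W.sum_tilt W.θ)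
  obtain ⟨c, hc, hc₁, hcε⟩ : ∃ c > 0, 4 * c ≤ 1 ∧ 4 * c ≤ (ε * ε) ^ A :=
    ⟨min 1 ((ε * ε) ^ A) / 4, by positivity, by linarith [min_le_left 1 ((ε * ε) ^ A)],
      by linarith [min_le_right 1 ((ε * ε) ^ A)]⟩
  have hD : 0 < (c * c * e) ^ A := by positivity
  obtain ⟨N, hN⟩ := W.exists_pairCorr_fixOn_ge hc hD
  refine ⟨N, c * (c * c * e) ^ A / 2, by positivity,
    fun n f g h hf hg hh hfε hgε hdefect => ?_⟩
  have hpair : 4 * c ≤ W.pairCorr f g := by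
    refine le_trans ?_ (W.pow_mul_biasedMean_le_pairCorr hA hrev hf hg)
    refine hcε.trans ?_
    gcongr
    exact (W.biasedMean_mem_Icc hf).1
  obtain ⟨J, hJN, u, hu, hpairJ, hdefectJ⟩ := hN n f g h hf hg hh hpair hdefect
  exact ⟨J, hJN, u, hu, W.one_sub_le_biasedMean_of_defect_lt hA hrev (fun _ => hf _)
    (fun _ => hg _) (fun _ => hh _) hc.le he.le (by linarith) hpairJ hdefectJ⟩

end Regularity

end TripleWeights

section TransTriple

variable {α : Type*} [SemilatticeInf α]

/-- Three bits form a transitive triple if no two of them are `1` while the third is `0`; triples of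
bit vectors are treated coordinatewise. -/
def TransTriple (x y z : α) : Prop :=
  x ⊓ y ≤ z ∧ y ⊓ z ≤ x ∧ z ⊓ x ≤ y

theorem TransTriple.rotate {x y z : α} (h : TransTriple x y z) : TransTriple y z x :=
  ⟨h.2.1, h.2.2, h.1⟩

theorem transTriple_inf (x y : α) : TransTriple x y (x ⊓ y) :=
  ⟨le_rfl, inf_le_right.trans inf_le_left, inf_le_left.trans inf_le_right⟩

theorem transTriple_pi_iff {ι : Type*} {π : ι → Type*} [∀ k, SemilatticeInf (π k)]
    {x y z : ∀ k, π k} : TransTriple x y z ↔ ∀ k, TransTriple (x k) (y k) (z k) := by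
  simp only [TransTriple, Pi.le_def, Pi.inf_apply, forall_and]

theorem exists_iff_le_of_transTriple [Finite α] {F G H : α → Prop} {x₀ y₀ : α} (hx₀ : F x₀)
    (hy₀ : G y₀) (hH : ∀ x y z, TransTriple x y z → F x → G y → H z)
    (hF : ∀ x y z, TransTriple x y z → G y → H z → F x)
    (hG : ∀ x y z, TransTriple x y z → H z → F x → G y) :
    ∃ a, (∀ x, F x ↔ a ≤ x) ∧ (∀ x, G x ↔ a ≤ x) ∧ ∀ x, H x ↔ a ≤ x := by
  have hinf {x y : α} (hx : F x) (hy : G y) : F (x ⊓ y) ∧ G (x ⊓ y) ∧ H (x ⊓ y) := by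
    have hz := hH x y (x ⊓ y) (transTriple_inf x y) hx hy
    refine ⟨hF _ y _ ?_ hy hz, hG x _ _ ?_ hz hx, hz⟩ <;> simp [TransTriple]
  obtain ⟨a, ⟨haF, haG, haH⟩, hmin⟩ := exists_minimal_of_wellFoundedLT
    (fun x => F x ∧ G x ∧ H x) ⟨x₀ ⊓ y₀, hinf hx₀ hy₀⟩
  have hle {x : α} (hx : F (x ⊓ a) ∧ G (x ⊓ a) ∧ H (x ⊓ a)) : a ≤ x :=
    (hmin hx inf_le_right).trans inf_le_left
  have hleF {x : α} (hx : F x) : a ≤ x := hle (hinf hx haG)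
  have hleG {x : α} (hx : G x) : a ≤ x := hle (inf_comm x a ▸ hinf haF hx)
  have hleH {x : α} (hx : H x) : a ≤ x :=
    (hleG (hG a (x ⊓ a) x (by simp [TransTriple]) hx haF)).trans inf_le_left
  refine ⟨a, fun x => ⟨hleF, fun hx => hF x a a ?_ haG haH⟩,
    fun x => ⟨hleG, fun hx => hG a x a ?_ haH haF⟩,
    fun x => ⟨hleH, fun hx => hH a a x ?_ haF haG⟩⟩ <;>
  simp [TransTriple, hx]

end TransTriple

/-- The mean distance from `f` to the conjunction of the coordinates at which `a` is `true`, whose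
value is `1` exactly on `Set.Ici a`. -/
noncomputable def andDist {ι : Type*} [Fintype ι] [DecidableEq ι] (q : ℝ) (f : (ι → Bool) → ℝ)
    (a : ι → Bool) : ℝ :=
  biasedMean q fun x => |f x - (Set.Ici a).indicator 1 x|

namespace TripleWeights

variable (W : TripleWeights) {n : ℕ} {f g h : (Fin n → Bool) → ℝ}

theorem andDist_le_of_fixOn {J : Finset (Fin n)} {a : Fin n → Bool} {ρ : ℝ}
    (hf : ∀ x, f x ∈ Set.Icc 0 1)
    (hdich : ∀ x, biasedMean W.q (fixOn J x f) ≤ ρ ∨ 1 - ρ ≤ biasedMean W.q (fixOn J x f))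
    (ha : ∀ x, 1 - ρ ≤ biasedMean W.q (fixOn J x f) ↔ a ≤ x) : andDist W.q f a ≤ ρ := by
  have hsum (_ : Fin n) : ∑ b, bernoulliWeight W.q b = 1 := sum_bernoulliWeight _
  have hlocal (u v : Fin n → Bool) : a ≤ J.piecewise u v ↔ a ≤ u := by
    rw [← ha, ← ha, fixOn_piecewise]
  have hsplit : andDist W.q f a = prodExp (fun _ => bernoulliWeight W.q) fun u =>
      biasedMean W.q fun v => |fixOn J u f v - (Set.Ici a).indicator 1 u| := by
    have hind (u v : Fin n → Bool) : (Set.Ici a).indicator (1 : (Fin n → Bool) → ℝ)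
        (J.piecewise u v) = (Set.Ici a).indicator 1 u :=
      Set.indicator_eq_indicator (hlocal u v) rfl
    have h := prodExp_piecewise hsum hsum J fun x => |f x - (Set.Ici a).indicator 1 x|
    simp only [piecewise_same, hind] at h
    exact h
  rw [hsplit]
  refine (prodExp_mono (fun _ b => (W.bernoulliWeight_pos b).le) fun u => ?_).trans_eq
    (prodExp_const hsum ρ)
  by_cases hau : a ≤ u
  · have habs (v) : |fixOn J u f v - 1| = 1 - fixOn J u f v :=
      (abs_sub_comm _ _).trans (abs_of_nonneg (sub_nonneg.2 (hf _).2))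
    simp only [Set.indicator_of_mem (Set.mem_Ici.2 hau), Pi.one_apply, habs, biasedMean_one_sub]
    linarith [(ha u).2 hau]
  · have habs (v) : |fixOn J u f v| = fixOn J u f v := abs_of_nonneg (hf _).1
    simp only [Set.indicator_of_notMem (mt Set.mem_Ici.1 hau), sub_zero, habs]
    exact (hdich u).resolve_right (mt (ha u).1 hau)

section Base

theorem transTriple_of_base_pos {x y z : Bool} (h : 0 < W.base (x, y, z)) : TransTriple x y z := by
  cases x <;> cases y <;> cases z <;> revert h <;> simp [base, tripleWeight, TransTriple]

/-- The least mass that `W.base` gives to a transitive triple. -/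
noncomputable def minMass : ℝ :=
  min W.a (min W.b W.c)

theorem minMass_pos : 0 < W.minMass :=
  lt_min W.a_pos (lt_min W.b_pos W.c_pos)

theorem minMass_le_base {x y z : Bool} (h : TransTriple x y z) : W.minMass ≤ W.base (x, y, z) := by
  revert h
  cases x <;> cases y <;> cases z <;> simp [TransTriple, base, tripleWeight, minMass]

theorem minMass_le_one : W.minMass ≤ 1 := by
  have := W.b_pos
  have := W.c_pos
  linarith [W.sum_eq_one, min_le_left W.a (min W.b W.c), show W.minMass ≤ W.a from min_le_left _ _]

theorem pow_mul_corr_fixOn_le {J : Finset (Fin n)} {x y z : Fin n → Bool}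
    (hxyz : TransTriple x y z) (hf : ∀ x, f x ∈ Set.Icc 0 1) (hg : ∀ x, g x ∈ Set.Icc 0 1)
    (hh : ∀ x, h x ∈ Set.Icc 0 1) :
    W.minMass ^ #J * W.corr 0 (fixOn J x f) (fixOn J y g) (fixOn J z h) ≤ W.corr 0 f g h := by
  have hpat := pow_card_mul_prodExp_piecewise_le (w := fun _ : Fin n => W.base) (J := J)
    (u := fun k => (x k, y k, z k)) (fun _ => W.base_mem_stdSimplex) W.minMass_pos.le
    (fun k _ => W.minMass_le_base (transTriple_pi_iff.1 hxyz k))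
    (F := fun v => f (fun k => (v k).1) * g (fun k => (v k).2.1) * h (fun k => (v k).2.2))
    fun v => mul_nonneg (mul_nonneg (hf _).1 (hg _).1) (hh _).1
  simpa only [corr, tripleCorr, tilt_zero, fixOn, piecewise_comp fun i : Bool × Bool × Bool => i.1,
    piecewise_comp fun i : Bool × Bool × Bool => i.2.1,
    piecewise_comp fun i : Bool × Bool × Bool => i.2.2] using hpat

theorem pow_mul_defect_fixOn_le {J : Finset (Fin n)} {x y z : Fin n → Bool}
    (hxyz : TransTriple x y z) (hf : ∀ x, f x ∈ Set.Icc 0 1) (hg : ∀ x, g x ∈ Set.Icc 0 1)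
    (hh : ∀ x, h x ∈ Set.Icc 0 1) :
    W.minMass ^ #J * W.defect 0 (fixOn J x f) (fixOn J y g) (fixOn J z h) ≤ W.defect 0 f g h := by
  simp only [defect, mul_add]
  exact add_le_add (add_le_add
    (W.pow_mul_corr_fixOn_le hxyz hf hg fun x => Set.Icc.one_sub_mem (hh x))
    (W.pow_mul_corr_fixOn_le hxyz hf (fun x => Set.Icc.one_sub_mem (hg x)) hh))
    (W.pow_mul_corr_fixOn_le hxyz (fun x => Set.Icc.one_sub_mem (hf x)) hg hh)

end Base

section Correlation

theorem tilt_zero_nonneg (i : Bool × Bool × Bool) : 0 ≤ W.tilt 0 i :=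
  W.tilt_zero ▸ W.base_mem_stdSimplex.1 i

theorem corr_le_pairCorr (hf : ∀ x, f x ∈ Set.Icc 0 1) (hg : ∀ x, g x ∈ Set.Icc 0 1)
    (hh : ∀ x, h x ∈ Set.Icc 0 1) : W.corr 0 f g h ≤ W.pairCorr g h := by
  rw [← W.corr_rotate 0 f g h, ← W.corr_add_corr_one_sub 0 g h f]
  exact le_add_of_nonneg_right
    (W.corr_nonneg W.tilt_zero_nonneg hg hh fun x => Set.Icc.one_sub_mem (hf x))

theorem pairCorr_le_corr_add (hf : ∀ x, f x ∈ Set.Icc 0 1) (hg : ∀ x, g x ∈ Set.Icc 0 1)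
    (hh : ∀ x, h x ∈ Set.Icc 0 1) :
    W.pairCorr f g ≤ W.corr 0 f g h + (1 - biasedMean W.q h) := by
  rw [← W.corr_add_corr_one_sub 0 f g h, ← biasedMean_one_sub]
  exact add_le_add_right ((W.corr_le_pairCorr hf hg fun x => Set.Icc.one_sub_mem (hh x)).trans
    (W.pairCorr_le_right (fun x => (hg x).2) fun x => (Set.Icc.one_sub_mem (hh x)).1)) _

theorem biasedMean_le_corr_add (hf : ∀ x, f x ∈ Set.Icc 0 1) (hg : ∀ x, g x ∈ Set.Icc 0 1)
    (hh : ∀ x, h x ∈ Set.Icc 0 1) :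
    biasedMean W.q f ≤
      W.corr 0 f g h + (1 - biasedMean W.q g) + (1 - biasedMean W.q h) := by
  have hle := W.pairCorr_le_corr_add hf hg hh
  have hright := W.pairCorr_le_right (fun x => (hf x).2) fun x => (Set.Icc.one_sub_mem (hg x)).1
  rw [biasedMean_one_sub] at hright
  linarith [W.pairCorr_add_pairCorr_one_sub f g]

theorem one_sub_biasedMean_le (hf : ∀ x, f x ∈ Set.Icc 0 1) (hg : ∀ x, g x ∈ Set.Icc 0 1)
    (hh : ∀ x, h x ∈ Set.Icc 0 1) :
    1 - biasedMean W.q h ≤ W.corr 0 f g (fun x => 1 - h x) +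
      W.pairCorr (fun x => 1 - g x) (fun x => 1 - h x) +
      W.pairCorr (fun x => 1 - h x) (fun x => 1 - f x) := by
  have hle := W.corr_le_pairCorr hf (fun x => Set.Icc.one_sub_mem (hg x))
    fun x => Set.Icc.one_sub_mem (hh x)
  have hmean := W.pairCorr_add_pairCorr_one_sub (fun x => 1 - h x) f
  have hpair := W.corr_add_corr_one_sub 0 (fun x => 1 - h x) f g
  rw [biasedMean_one_sub] at hmean
  rw [← W.corr_rotate _ (fun x => 1 - h x) f g,
    ← W.corr_rotate _ (fun x => 1 - h x) f fun x => 1 - g x] at hpair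
  linarith

theorem exists_sum_one_sub_biasedMean_le : ∃ e > 0, e ≤ 1 / 2 ∧
    ∀ (n : ℕ) (f g h : (Fin n → Bool) → ℝ), (∀ x, f x ∈ Set.Icc 0 1) →
      (∀ x, g x ∈ Set.Icc 0 1) → (∀ x, h x ∈ Set.Icc 0 1) → 1 - e ≤ biasedMean W.q f →
      1 - e ≤ biasedMean W.q g → 1 - e ≤ biasedMean W.q h →
      (1 - biasedMean W.q f) + (1 - biasedMean W.q g) + (1 - biasedMean W.q h) ≤
        2 * W.defect 0 f g h := by
  obtain ⟨η, hη, hexp⟩ := exists_smallSetExpanding W.pairLaw_mem_stdSimplex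
    (fun _ _ => ⟨true, W.pairLaw_pos _, W.pairLaw_pos _⟩) (show (0 : ℝ) < 1 / 8 by norm_num)
  refine ⟨min η (1 / 2), by positivity, min_le_right _ _,
    fun n f g h hf hg hh hfe hge hhe => ?_⟩
  have hfst (f : (Fin n → Bool) → ℝ) :
      prodExp (fun _ => W.pairLaw) (fun x => f (fun k => (x k).1)) = biasedMean W.q f := by
    simp only [← W.pairCorr_one_right, pairCorr, mul_one]
  have hsnd (f : (Fin n → Bool) → ℝ) :
      prodExp (fun _ => W.pairLaw) (fun x => f (fun k => (x k).2)) = biasedMean W.q f := by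
    rw [← W.pairCorr_one_right, ← W.pairCorr_comm]
    simp only [pairCorr, one_mul]
  have hsmall {f g : (Fin n → Bool) → ℝ} (hf : ∀ x, f x ∈ Set.Icc 0 1)
      (hg : ∀ x, g x ∈ Set.Icc 0 1) (hge : 1 - min η (1 / 2) ≤ biasedMean W.q g) :
      W.pairCorr (fun x => 1 - f x) (fun x => 1 - g x) ≤
        1 / 8 * ((1 - biasedMean W.q f) + (1 - biasedMean W.q g)) := by
    have h := hexp n _ _ (fun x => Set.Icc.one_sub_mem (hf x)) fun x => Set.Icc.one_sub_mem (hg x)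
    rw [hfst fun x => 1 - f x, hsnd fun x => 1 - g x, biasedMean_one_sub, biasedMean_one_sub] at h
    exact h (by linarith [min_le_left η (1 / 2)])
  have hfg := hsmall hf hg hge
  have hgh := hsmall hg hh hhe
  have hhf := hsmall hh hf hfe
  have hh' := W.one_sub_biasedMean_le hf hg hh
  have hf' := W.one_sub_biasedMean_le hg hh hf
  have hg' := W.one_sub_biasedMean_le hh hf hg
  rw [corr_rotate] at hf'
  rw [← W.corr_rotate 0 h] at hg'
  rw [defect]
  linarith

end Correlation

end TripleWeights

namespace TripleWeights

variable (W : TripleWeights) {n : ℕ} {f g h : (Fin n → Bool) → ℝ}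

theorem biasedMean_le_or_le {A : ℕ} (hA : 1 ≤ A) (hrev : RevHypercontractive A (W.tilt W.θ))
    (hf : ∀ x, f x ∈ Set.Icc 0 1) (hg : ∀ x, g x ∈ Set.Icc 0 1) {ρ : ℝ} (hρ : 0 ≤ ρ)
    (hfg : W.pairCorr f (fun x => 1 - g x) ≤ (ρ / 2) ^ A)
    (hgf : W.pairCorr (fun x => 1 - f x) g ≤ (ρ / 2) ^ A) :
    biasedMean W.q f ≤ ρ ∨ 1 - ρ ≤ biasedMean W.q f := by
  have hfg' := (W.pow_mul_biasedMean_le_pairCorr hA hrev hf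
    fun x => Set.Icc.one_sub_mem (hg x)).trans hfg
  have hgf' := (W.pow_mul_biasedMean_le_pairCorr hA hrev
    (fun x => Set.Icc.one_sub_mem (hf x)) hg).trans hgf
  rw [biasedMean_one_sub] at hfg' hgf'
  have hs : 0 ≤ ρ / 2 := by positivity
  have hfg'' := le_of_pow_le_pow_left₀ (by omega) hs hfg'
  have hgf'' := le_of_pow_le_pow_left₀ (by omega) hs hgf'
  have hmem := W.biasedMean_mem_Icc hf
  rcases le_total (biasedMean W.q g) (1 / 2) with hle | hle
  · left
    nlinarith [hmem.1]
  · right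
    nlinarith [hmem.2]

/-- The restrictions of `f`, `g`, `h` fixing the coordinates in `J` have defect at most `δ` for
all transitive triples of patterns. -/
def RestrictionsDefectLE (J : Finset (Fin n)) (δ : ℝ) (f g h : (Fin n → Bool) → ℝ) : Prop :=
  ∀ x y z, TransTriple x y z → W.defect 0 (fixOn J x f) (fixOn J y g) (fixOn J z h) ≤ δ

variable {W} {J : Finset (Fin n)} {δ ρ : ℝ}

theorem RestrictionsDefectLE.rotate (hJ : W.RestrictionsDefectLE J δ f g h) :
    W.RestrictionsDefectLE J δ g h f := fun y z x hyzx =>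
  (W.defect_rotate _ _ _ _).trans_le (hJ x y z hyzx.rotate.rotate)

theorem RestrictionsDefectLE.biasedMean_le_or_le (hJ : W.RestrictionsDefectLE J δ f g h)
    {A : ℕ} (hA : 1 ≤ A) (hrev : RevHypercontractive A (W.tilt W.θ))
    (hf : ∀ x, f x ∈ Set.Icc 0 1) (hg : ∀ x, g x ∈ Set.Icc 0 1) (hh : ∀ x, h x ∈ Set.Icc 0 1)
    (hρ : 0 ≤ ρ) (hδ : 3 * δ ≤ (ρ / 2) ^ A) {z : Fin n → Bool}
    (hz : 1 - biasedMean W.q (fixOn J z h) ≤ 2 * δ) (x : Fin n → Bool) :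
    biasedMean W.q (fixOn J x f) ≤ ρ ∨ 1 - ρ ≤ biasedMean W.q (fixOn J x f) := by
  have hf' (v) : fixOn J x f v ∈ Set.Icc 0 1 := hf _
  have hg' (v) : fixOn J (z ⊓ x) g v ∈ Set.Icc 0 1 := hg _
  have hh' (v) : fixOn J z h v ∈ Set.Icc 0 1 := hh _
  have hdefect := hJ _ _ _ (transTriple_inf z x).rotate
  rw [defect] at hdefect
  have hnonneg := W.corr_nonneg W.tilt_zero_nonneg hf' hg' fun v => Set.Icc.one_sub_mem (hh' v)
  have hnonneg_f := W.corr_nonneg W.tilt_zero_nonneg (fun v => Set.Icc.one_sub_mem (hf' v)) hg' hh'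
  have hnonneg_g := W.corr_nonneg W.tilt_zero_nonneg hf' (fun v => Set.Icc.one_sub_mem (hg' v)) hh'
  refine W.biasedMean_le_or_le hA hrev hf' hg' hρ ?_ ?_
  · linarith [W.pairCorr_le_corr_add hf' (fun v => Set.Icc.one_sub_mem (hg' v)) hh']
  · linarith [W.pairCorr_le_corr_add (fun v => Set.Icc.one_sub_mem (hf' v)) hg' hh']

theorem RestrictionsDefectLE.one_sub_le_biasedMean (hJ : W.RestrictionsDefectLE J δ f g h)
    (hf : ∀ x, f x ∈ Set.Icc 0 1) (hg : ∀ x, g x ∈ Set.Icc 0 1) (hh : ∀ x, h x ∈ Set.Icc 0 1)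
    (hδρ : δ + 3 * ρ < 1)
    (hdich : ∀ z, biasedMean W.q (fixOn J z h) ≤ ρ ∨ 1 - ρ ≤ biasedMean W.q (fixOn J z h))
    {x y z : Fin n → Bool} (hxyz : TransTriple x y z) (hx : 1 - ρ ≤ biasedMean W.q (fixOn J x f))
    (hy : 1 - ρ ≤ biasedMean W.q (fixOn J y g)) : 1 - ρ ≤ biasedMean W.q (fixOn J z h) := by
  refine (hdich z).resolve_left fun hz => ?_
  have hf' (v) : fixOn J x f v ∈ Set.Icc 0 1 := hf _
  have hg' (v) : fixOn J y g v ∈ Set.Icc 0 1 := hg _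
  have hh' (v) : fixOn J z h v ∈ Set.Icc 0 1 := hh _
  have hle := W.biasedMean_le_corr_add hf' hg' fun v => Set.Icc.one_sub_mem (hh' v)
  rw [biasedMean_one_sub] at hle
  linarith [hJ x y z hxyz,
    W.corr_one_sub_right_le_defect W.tilt_zero_nonneg hf' hg' hh']

theorem RestrictionsDefectLE.exists_andDist_le (hJ : W.RestrictionsDefectLE J δ f g h)
    {A : ℕ} (hA : 1 ≤ A) (hrev : RevHypercontractive A (W.tilt W.θ))
    (hf : ∀ x, f x ∈ Set.Icc 0 1) (hg : ∀ x, g x ∈ Set.Icc 0 1) (hh : ∀ x, h x ∈ Set.Icc 0 1)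
    (hδ : 3 * δ ≤ (ρ / 2) ^ A) (hρ : 2 * δ ≤ ρ) (hδρ : δ + 3 * ρ < 1) {x y z : Fin n → Bool}
    (hxyz : (1 - biasedMean W.q (fixOn J x f)) + (1 - biasedMean W.q (fixOn J y g)) +
      (1 - biasedMean W.q (fixOn J z h)) ≤ 2 * δ) :
    ∃ a, andDist W.q f a ≤ ρ ∧ andDist W.q g a ≤ ρ ∧ andDist W.q h a ≤ ρ := by
  have hx := (W.biasedMean_mem_Icc (f := fixOn J x f) fun _ => hf _).2
  have hy := (W.biasedMean_mem_Icc (f := fixOn J y g) fun _ => hg _).2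
  have hz := (W.biasedMean_mem_Icc (f := fixOn J z h) fun _ => hh _).2
  have hρ₀ : 0 ≤ ρ := by linarith
  have hdichF := hJ.biasedMean_le_or_le hA hrev hf hg hh hρ₀ hδ (z := z) (by linarith)
  have hdichG := hJ.rotate.biasedMean_le_or_le hA hrev hg hh hf hρ₀ hδ (z := x) (by linarith)
  have hdichH := hJ.rotate.rotate.biasedMean_le_or_le hA hrev hh hf hg hρ₀ hδ (z := y)
    (by linarith)
  obtain ⟨a, haF, haG, haH⟩ := exists_iff_le_of_transTriple
    (F := fun x => 1 - ρ ≤ biasedMean W.q (fixOn J x f))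
    (G := fun y => 1 - ρ ≤ biasedMean W.q (fixOn J y g))
    (H := fun z => 1 - ρ ≤ biasedMean W.q (fixOn J z h)) (x₀ := x) (y₀ := y)
    (by linarith) (by linarith)
    (fun _ _ _ hxyz => hJ.one_sub_le_biasedMean hf hg hh hδρ hdichH hxyz)
    (fun _ _ _ hxyz => hJ.rotate.one_sub_le_biasedMean hg hh hf hδρ hdichF hxyz.rotate)
    fun _ _ _ hxyz =>
      hJ.rotate.rotate.one_sub_le_biasedMean hh hf hg hδρ hdichG hxyz.rotate.rotate
  exact ⟨a, W.andDist_le_of_fixOn hf hdichF haF, W.andDist_le_of_fixOn hg hdichG haG,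
    W.andDist_le_of_fixOn hh hdichH haH⟩

theorem RestrictionsDefectLE.of_defect_le (hf : ∀ x, f x ∈ Set.Icc 0 1)
    (hg : ∀ x, g x ∈ Set.Icc 0 1) (hh : ∀ x, h x ∈ Set.Icc 0 1) {N : ℕ} (hJ : #J ≤ N)
    (hδ : W.defect 0 f g h ≤ W.minMass ^ N * δ) : W.RestrictionsDefectLE J δ f g h := by
  intro x y z hxyz
  have hnonneg := W.defect_nonneg W.tilt_zero_nonneg (f := fixOn J x f) (g := fixOn J y g)
    (h := fixOn J z h) (fun _ => hf _) (fun _ => hg _) fun _ => hh _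
  refine le_of_mul_le_mul_left ?_ (pow_pos W.minMass_pos N)
  calc W.minMass ^ N * W.defect 0 (fixOn J x f) (fixOn J y g) (fixOn J z h)
      ≤ W.minMass ^ #J * W.defect 0 (fixOn J x f) (fixOn J y g) (fixOn J z h) :=
        mul_le_mul_of_nonneg_right
          (pow_le_pow_of_le_one W.minMass_pos.le W.minMass_le_one hJ) hnonneg
    _ ≤ W.defect 0 f g h := W.pow_mul_defect_fixOn_le hxyz hf hg hh
    _ ≤ W.minMass ^ N * δ := hδ

variable (W)

theorem exists_andDist_le {ε η : ℝ} (hε : 0 < ε) (hη : 0 < η) : ∃ δ > 0,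
    ∀ (n : ℕ) (f g h : (Fin n → Bool) → ℝ), (∀ x, f x ∈ Set.Icc 0 1) →
      (∀ x, g x ∈ Set.Icc 0 1) → (∀ x, h x ∈ Set.Icc 0 1) → ε ≤ biasedMean W.q f →
      ε ≤ biasedMean W.q g → W.defect 0 f g h ≤ δ →
      ∃ a, andDist W.q f a ≤ η ∧ andDist W.q g a ≤ η ∧ andDist W.q h a ≤ η := by
  obtain ⟨A, hA, hrev⟩ := exists_revHypercontractive W.tilt_pos (W.sum_tilt W.θ)
  obtain ⟨e, he, he', hboot⟩ := W.exists_sum_one_sub_biasedMean_le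
  obtain ⟨N, δ₀, hδ₀, hN⟩ := W.exists_biasedMean_fixOn_ge hε he he'
  obtain ⟨ρ, hρ, hρη, hρ'⟩ : ∃ ρ > 0, ρ ≤ η ∧ ρ ≤ 1 / 4 :=
    ⟨min η (1 / 4), by positivity, min_le_left _ _, min_le_right _ _⟩
  set δ₁ : ℝ := (ρ / 2) ^ A / 3
  have hδ₁ : 3 * δ₁ ≤ ρ / 2 :=
    (mul_div_cancel₀ _ three_ne_zero).trans_le
      (pow_le_of_le_one (by positivity) (by linarith) (by omega))
  have hmass : 0 < W.minMass ^ N * δ₁ := mul_pos (pow_pos W.minMass_pos N) (by positivity)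
  refine ⟨min δ₀ (W.minMass ^ N * δ₁), lt_min hδ₀ hmass,
    fun n f g h hf hg hh hfε hgε hdefect => ?_⟩
  obtain ⟨J, hJN, u, hu, hfu, hgu, hhu⟩ :=
    hN n f g h hf hg hh hfε hgε (hdefect.trans (min_le_left _ _))
  have hJ := RestrictionsDefectLE.of_defect_le hf hg hh hJN (hdefect.trans (min_le_right _ _))
  have hu' : TransTriple (fun k => (u k).1) (fun k => (u k).2.1) fun k => (u k).2.2 :=
    transTriple_pi_iff.2 fun k => W.transTriple_of_base_pos (hu k)
  have hsum := (hboot n _ _ _ (fun _ => hf _) (fun _ => hg _) (fun _ => hh _) hfu hgu hhu).trans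
    (mul_le_mul_of_nonneg_left (hJ _ _ _ hu') zero_le_two)
  obtain ⟨a, haf, hag, hah⟩ := hJ.exists_andDist_le hA hrev hf hg hh
    (mul_div_cancel₀ _ three_ne_zero).le (by linarith) (by linarith) hsum
  exact ⟨a, haf.trans hρη, hag.trans hρη, hah.trans hρη⟩

end TripleWeights

section Uniqueness

variable {ι : Type*} [Fintype ι] [DecidableEq ι] {q : ℝ}

theorem bernoulliWeight_nonneg (hq : q ∈ Set.Icc 0 1) (x : Bool) : 0 ≤ bernoulliWeight q x := by
  rw [bernoulliWeight]
  split_ifs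
  exacts [hq.1, sub_nonneg.2 hq.2]

theorem biasedMean_mono (hq : q ∈ Set.Icc 0 1) {f g : (ι → Bool) → ℝ} (h : ∀ x, f x ≤ g x) :
    biasedMean q f ≤ biasedMean q g :=
  prodExp_mono (fun _ => bernoulliWeight_nonneg hq) h

-- Resampling a coordinate required by `b` but not by `a` to `false` turns an input accepted by `a`
-- into one at which the two conjunctions differ.
theorem one_sub_mul_biasedMean_indicator_Ici_le (hq : q ∈ Set.Icc 0 1) {a b : ι → Bool}
    (hba : ¬b ≤ a) :
    (1 - q) * biasedMean q ((Set.Ici a).indicator 1) ≤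
      biasedMean q fun x => |(Set.Ici a).indicator 1 x - (Set.Ici b).indicator 1 x| := by
  obtain ⟨t, ht⟩ : ∃ t, ¬b t ≤ a t := by simpa only [Pi.le_def, not_forall] using hba
  obtain ⟨hat, hbt⟩ : a t = false ∧ b t = true := by
    revert ht
    cases a t <;> cases b t <;> simp
  let F (x : ι → Bool) : ℝ := |(Set.Ici a).indicator 1 x - (Set.Ici b).indicator 1 x|
  have hresample (x : ι → Bool) :
      (Set.Ici a).indicator 1 x ≤ F (Function.update x t false) := by
    have hb : Function.update x t false ∉ Set.Ici b := fun h => by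
      simpa [hbt, Bool.le_iff_imp] using h t
    by_cases hx : x ∈ Set.Ici a
    · have ha : Function.update x t false ∈ Set.Ici a :=
        le_update_iff.2 ⟨hat.le, fun k _ => hx k⟩
      simp [F, ha, hb, hx]
    · simp [F, hx]
  have hsum := prodExp_update (w := fun _ : ι => bernoulliWeight q) (k := t)
    (sum_bernoulliWeight q) (bernoulliWeight q) F
  rw [Function.update_eq_self, Fintype.sum_bool] at hsum
  have htrue : 0 ≤ bernoulliWeight q true *
      prodExp (fun _ => bernoulliWeight q) fun x => F (Function.update x t true) :=
    mul_nonneg (bernoulliWeight_nonneg hq _)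
      (prodExp_nonneg (fun _ => bernoulliWeight_nonneg hq) fun _ => abs_nonneg _)
  exact (mul_le_mul_of_nonneg_left (biasedMean_mono hq hresample) (sub_nonneg.2 hq.2)).trans
    ((le_add_of_nonneg_left htrue).trans_eq hsum.symm)

theorem le_of_andDist_le (hq : q ∈ Set.Icc 0 1) {f : (ι → Bool) → ℝ} {a b : ι → Bool} {ε η : ℝ}
    (hε : ε ≤ biasedMean q f) (ha : andDist q f a ≤ η) (hb : andDist q f b ≤ η)
    (hη : 2 * η < (1 - q) * (ε - η)) : b ≤ a := by
  by_contra hba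
  have hmean : biasedMean q f ≤ biasedMean q ((Set.Ici a).indicator 1) + andDist q f a := by
    simp only [andDist, biasedMean, ← prodExp_add]
    exact biasedMean_mono hq fun x => by linarith [le_abs_self (f x - (Set.Ici a).indicator 1 x)]
  have hdist : (biasedMean q fun x => |(Set.Ici a).indicator 1 x - (Set.Ici b).indicator 1 x|) ≤
      andDist q f a + andDist q f b := by
    simp only [andDist, biasedMean, ← prodExp_add]
    refine biasedMean_mono hq fun x => ?_
    rw [abs_sub_comm (f x)]
    exact abs_sub_le _ _ _
  have hle := one_sub_mul_biasedMean_indicator_Ici_le hq hba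
  have hmean' : ε - η ≤ biasedMean q ((Set.Ici a).indicator 1) := by linarith
  linarith [mul_le_mul_of_nonneg_left hmean' (sub_nonneg.2 hq.2)]

end Uniqueness

section Probability

variable {Ω Ω' : Type*} [Fintype Ω] [Fintype Ω'] {p : ℕ}

theorem prodPr_eq_prodExp (μ : Ω → ℝ) (P : (Fin p → Ω) → Prop) [DecidablePred P] :
    prodPr μ p P = prodExp (fun _ => μ) fun x => if P x then 1 else 0 := by
  classical
  simp only [prodPr, prodExp, mul_ite, mul_one, mul_zero]
  congr!

theorem prodPr_not {μ : Ω → ℝ} (hμ : ∑ a, μ a = 1) (P : (Fin p → Ω) → Prop) :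
    prodPr μ p (fun x => ¬P x) = 1 - prodPr μ p P := by
  classical
  rw [prodPr_eq_prodExp, prodPr_eq_prodExp, ← prodExp_one_sub fun _ => hμ]
  refine congrArg _ (funext fun x => ?_)
  split_ifs <;> simp

theorem prodPr_mono {μ : Ω → ℝ} (hμ : ∀ a, 0 ≤ μ a) {P Q : (Fin p → Ω) → Prop}
    (h : ∀ x, P x → Q x) : prodPr μ p P ≤ prodPr μ p Q := by
  classical
  rw [prodPr_eq_prodExp, prodPr_eq_prodExp]
  refine prodExp_mono (fun _ => hμ) fun x => ?_
  by_cases hP : P x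
  · simp [hP, h x hP]
  · simp only [hP, if_false]
    positivity

theorem prodPr_mapWeight [DecidableEq Ω'] (φ : Ω → Ω') (μ : Ω → ℝ) (P : (Fin p → Ω') → Prop) :
    prodPr (mapWeight φ μ) p P = prodPr μ p fun x => P fun k => φ (x k) := by
  classical
  rw [prodPr_eq_prodExp, prodPr_eq_prodExp]
  exact (prodExp_map (fun _ => μ) (fun _ => φ) _).symm

/-- The indicator function of the event that `f` is `true`. -/
def trueIndicator {α : Type*} (f : α → Bool) (x : α) : ℝ :=
  if f x = true then 1 else 0

theorem trueIndicator_mem_Icc {α : Type*} (f : α → Bool) (x : α) :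
    trueIndicator f x ∈ Set.Icc 0 1 := by
  rw [trueIndicator]
  split_ifs <;> norm_num

theorem nuPr_eq_false (q : ℝ) (f : (Fin p → Bool) → Bool) :
    nuPr q p (fun y => f y = false) = 1 - biasedMean q (trueIndicator f) := by
  simp only [← Bool.not_eq_true]
  refine (prodPr_not (sum_bernoulliWeight q) _).trans ?_
  rw [prodPr_eq_prodExp]
  rfl

theorem nuPr_eq_decide_forall (q : ℝ) (f : (Fin p → Bool) → Bool) (S : Finset (Fin p)) :
    nuPr q p (fun y => f y = decide (∀ s ∈ S, y s = true)) =
      1 - andDist q (trueIndicator f) fun s => decide (s ∈ S) := by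
  rw [andDist, ← biasedMean_one_sub]
  refine (prodPr_eq_prodExp (bernoulliWeight q) _).trans (congrArg _ (funext fun y => ?_))
  have hmem : y ∈ Set.Ici (fun s => decide (s ∈ S)) ↔ ∀ s ∈ S, y s = true := by
    simp [Pi.le_def, Bool.le_iff_imp]
  by_cases hy : ∀ s ∈ S, y s = true
  · rw [decide_eq_true hy, Set.indicator_of_mem (hmem.2 hy)]
    cases hf : f y <;> simp [trueIndicator, hf]
  · rw [decide_eq_false hy, Set.indicator_of_notMem (mt hmem.1 hy)]
    cases hf : f y <;> simp [trueIndicator, hf]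

theorem TripleWeights.defect_trueIndicator (W : TripleWeights) (f g h : (Fin p → Bool) → Bool) :
    W.defect 0 (trueIndicator f) (trueIndicator g) (trueIndicator h) =
      prodPr W.base p fun x => ¬TransTriple (f fun k => (x k).1) (g fun k => (x k).2.1)
        (h fun k => (x k).2.2) := by
  classical
  simp only [defect, corr, tripleCorr, ← prodExp_add, prodPr_eq_prodExp, W.tilt_zero]
  refine congrArg _ (funext fun x => ?_)
  simp only [trueIndicator]
  cases f _ <;> cases g _ <;> cases h _ <;> simp [TransTriple]

end Probability

section EquivVec

variable {m : ℕ} {i j k : Fin m}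

/-- The unordered pair `{i, j}`. -/
def edge (i j : Fin m) (h : i ≠ j) : PairIdx m :=
  ⟨(i ⊓ j, i ⊔ j), inf_lt_sup.2 h⟩

theorem edge_comm (h : i ≠ j) : edge j i h.symm = edge i j h :=
  Subtype.ext (Prod.ext (inf_comm j i) (sup_comm j i))

theorem edge_fst_snd (e : PairIdx m) : edge e.1.1 e.1.2 e.2.ne = e :=
  Subtype.ext (Prod.ext (inf_eq_left.2 e.2.le) (sup_eq_right.2 e.2.le))

theorem pget_eq_edge (x : PairIdx m → Bool) (h : i ≠ j) : pget x i j = x (edge i j h) := by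
  rcases h.lt_or_gt with hij | hji
  · rw [pget, dif_pos hij]
    exact congrArg x (edge_fst_snd ⟨(i, j), hij⟩).symm
  · rw [pget, dif_neg hji.not_gt, dif_pos hji, ← edge_comm]
    exact congrArg x (edge_fst_snd ⟨(j, i), hji⟩).symm

theorem IsEquivVec.transTriple {x : PairIdx m → Bool} (hx : IsEquivVec x) (hij : i ≠ j)
    (hjk : j ≠ k) (hki : k ≠ i) :
    TransTriple (x (edge i j hij)) (x (edge j k hjk)) (x (edge k i hki)) := by
  have hle {i j k : Fin m} (hij : i ≠ j) (hjk : j ≠ k) (hki : k ≠ i) :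
      x (edge i j hij) ⊓ x (edge j k hjk) ≤ x (edge k i hki) := by
    have h := hx i j k hij hjk hki.symm
    rw [pget_eq_edge x hij, pget_eq_edge x hjk, pget_eq_edge x hki.symm, edge_comm hki] at h
    rw [Bool.le_iff_imp]
    exact fun hxy => h (Bool.and_eq_true_iff.1 hxy).1 (Bool.and_eq_true_iff.1 hxy).2
  exact ⟨hle hij hjk hki, hle hjk hki hij, hle hki hij hjk⟩

/-- The vector of the equivalence relation whose classes are the fibres of `c`. -/
def kerVec {γ : Type*} [DecidableEq γ] (c : Fin m → γ) (e : PairIdx m) : Bool :=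
  decide (c e.1.1 = c e.1.2)

theorem kerVec_edge {γ : Type*} [DecidableEq γ] (c : Fin m → γ) (h : i ≠ j) :
    kerVec c (edge i j h) = decide (c i = c j) := by
  rcases h.lt_or_gt with hij | hji
  · simp [kerVec, edge, hij.le]
  · simp [kerVec, edge, hji.le, eq_comm]

theorem isEquivVec_kerVec {γ : Type*} [DecidableEq γ] (c : Fin m → γ) : IsEquivVec (kerVec c) := by
  intro i j k hij hjk hik
  simp only [pget_eq_edge, hij, hjk, hik, ne_eq, not_false_eq_true, kerVec_edge, decide_eq_true_eq]
  exact Eq.trans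

theorem exists_isEquivVec_of_transTriple (hij : i ≠ j) (hjk : j ≠ k) (hki : k ≠ i)
    {a b c : Bool} (habc : TransTriple a b c) : ∃ x : PairIdx m → Bool, IsEquivVec x ∧
      (x (edge i j hij), x (edge j k hjk), x (edge k i hki)) = (a, b, c) := by
  obtain ⟨φ, hφ⟩ : ∃ φ : Fin m → Fin m,
      (decide (φ i = φ j), decide (φ j = φ k), decide (φ k = φ i)) = (a, b, c) := by
    cases a <;> cases b <;> cases c
    · exact ⟨id, by simp [hij, hjk, hki]⟩
    · exact ⟨Function.update id k i, by simp [hij, hki.symm, hjk, hij.symm]⟩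
    · exact ⟨Function.update id j k, by simp [hij, hki, hki.symm, hjk.symm]⟩
    · simp [TransTriple, Bool.le_iff_imp] at habc
    · exact ⟨Function.update id i j, by simp [hjk, hij.symm, hki, hjk.symm]⟩
    · simp [TransTriple, Bool.le_iff_imp] at habc
    · simp [TransTriple, Bool.le_iff_imp] at habc
    · exact ⟨fun _ => i, by simp⟩
  exact ⟨kerVec φ, isEquivVec_kerVec φ, by simpa only [kerVec_edge] using hφ⟩

end EquivVec

section TripleLaw

theorem TripleWeights.exists_base_eq {l : Bool × Bool × Bool → ℝ}
    (hl : l ∈ stdSimplex ℝ (Bool × Bool × Bool))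
    (hpos : ∀ x y z, 0 < l (x, y, z) ↔ TransTriple x y z) {q : ℝ}
    (hfst : mapWeight (fun i => i.1) l true = q) (hsnd : mapWeight (fun i => i.2.1) l true = q)
    (htrd : mapWeight (fun i => i.2.2) l true = q) : ∃ W : TripleWeights, W.q = q ∧ W.base = l := by
  have hzero {x y z} (h : ¬TransTriple x y z) : l (x, y, z) = 0 :=
    ((hl.1 _).eq_or_lt.resolve_right (mt (hpos _ _ _).1 h)).symm
  have hftt : l (false, true, true) = 0 := hzero (by simp [TransTriple])
  have htft : l (true, false, true) = 0 := hzero (by simp [TransTriple])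
  have httf : l (true, true, false) = 0 := hzero (by simp [TransTriple])
  have hsum := hl.2
  simp only [mapWeight, sum_filter, Fintype.sum_prod_type, Fintype.sum_bool, hftt, htft, httf,
    ↓reduceIte, Bool.false_eq_true, add_zero, zero_add] at hfst hsnd htrd hsum
  refine ⟨⟨l (false, false, false), l (true, false, false), l (true, true, true),
    (hpos _ _ _).2 (by simp [TransTriple]), (hpos _ _ _).2 (by simp [TransTriple]),
    (hpos _ _ _).2 (by simp [TransTriple]), by linarith⟩, ?_, funext ?_⟩
  · rw [TripleWeights.q]
    linarith
  · rintro ⟨_ | _, _ | _, _ | _⟩ <;> simp only [base, tripleWeight] <;> linarith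

variable {m : ℕ} {i j k : Fin m} {μ : (PairIdx m → Bool) → ℝ} {q : ℝ}

theorem exists_tripleWeights_base_eq (hμ : μ ∈ stdSimplex ℝ (PairIdx m → Bool))
    (hsupp : ∀ x, 0 < μ x ↔ IsEquivVec x) (hq : ∀ e, mapWeight (fun x => x e) μ true = q)
    (hij : i ≠ j) (hjk : j ≠ k) (hki : k ≠ i) : ∃ W : TripleWeights, W.q = q ∧
      W.base = mapWeight (fun x => (x (edge i j hij), x (edge j k hjk), x (edge k i hki))) μ := by
  refine TripleWeights.exists_base_eq (mapWeight_mem_stdSimplex _ hμ) (fun a b c => ?_)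
    ((mapWeight_mapWeight _ _ μ true).trans (hq _)) ((mapWeight_mapWeight _ _ μ true).trans (hq _))
    ((mapWeight_mapWeight _ _ μ true).trans (hq _))
  rw [mapWeight, sum_pos_iff_of_nonneg fun x _ => hμ.1 x]
  constructor
  · rintro ⟨x, hx, hpos⟩
    obtain ⟨rfl, rfl, rfl⟩ : _ = a ∧ _ = b ∧ _ = c := by simpa using hx
    exact ((hsupp x).1 hpos).transTriple hij hjk hki
  · intro habc
    obtain ⟨x, hx, hxabc⟩ := exists_isEquivVec_of_transTriple hij hjk hki habc
    exact ⟨x, by simpa using hxabc, (hsupp x).2 hx⟩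

theorem TripleWeights.defect_edge_le {W : TripleWeights} (hμ : μ ∈ stdSimplex ℝ _) (hij : i ≠ j)
    (hjk : j ≠ k) (hki : k ≠ i)
    (hW : W.base = mapWeight (fun x => (x (edge i j hij), x (edge j k hjk), x (edge k i hki))) μ)
    {p : ℕ} (f : PairIdx m → (Fin p → Bool) → Bool) :
    W.defect 0 (trueIndicator (f (edge i j hij))) (trueIndicator (f (edge j k hjk)))
        (trueIndicator (f (edge k i hki))) ≤
      1 - prodPr μ p fun xs => IsEquivVec fun e => f e fun k => xs k e := by
  rw [defect_trueIndicator, hW, prodPr_mapWeight, ← prodPr_not hμ.2]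
  exact prodPr_mono hμ.1 fun xs => mt fun hx => hx.transTriple hij hjk hki

end TripleLaw

section Gluing

theorem exists_forall_of_triangles {V σ : Type*} [Fintype V] (hV : 2 < Fintype.card V)
    {R : V → V → σ → Prop} (hsymm : ∀ i j a, R i j a → R j i a)
    (huniq : ∀ i j a b, R i j a → R i j b → a = b)
    (htri : ∀ i j k, i ≠ j → j ≠ k → k ≠ i → ∃ a, R i j a ∧ R j k a ∧ R k i a) :
    ∃ a, ∀ i j, i ≠ j → R i j a := by
  obtain ⟨u, v, w, huv, huw, hvw⟩ := Fintype.two_lt_card_iff.1 hV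
  obtain ⟨a, ha, -, -⟩ := htri u v w huv hvw huw.symm
  have hstar (i : V) (hui : u ≠ i) : R u i a := by
    obtain rfl | hvi := eq_or_ne v i
    · exact ha
    · obtain ⟨b, hb, -, hb'⟩ := htri u v i huv hvi hui.symm
      exact huniq _ _ _ _ hb ha ▸ hsymm _ _ _ hb'
  refine ⟨a, fun i j hij => ?_⟩
  obtain rfl | hui := eq_or_ne u i
  · exact hstar j hij
  obtain rfl | huj := eq_or_ne u j
  · exact hsymm _ _ _ (hstar i hui)
  obtain ⟨b, hb, hb', -⟩ := htri u i j hui hij huj.symm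
  exact huniq _ _ _ _ hb (hstar i hui) ▸ hb'

end Gluing

open scoped Topology in
theorem exists_forall_triangle_andDist_edge_le {m : ℕ} {μ : (PairIdx m → Bool) → ℝ}
    (hμ : μ ∈ stdSimplex ℝ (PairIdx m → Bool)) (hsupp : ∀ x, 0 < μ x ↔ IsEquivVec x) {q : ℝ}
    (hq : ∀ e, mapWeight (fun x => x e) μ true = q) {ε η : ℝ} (hε : 0 < ε) (hη : 0 < η) :
    ∃ δ > 0, ∀ (i j k : Fin m) (hij : i ≠ j) (hjk : j ≠ k) (hki : k ≠ i) (p : ℕ)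
      (f : PairIdx m → (Fin p → Bool) → Bool),
      1 - δ ≤ prodPr μ p (fun xs => IsEquivVec fun e => f e fun k => xs k e) →
      (∀ e, ε ≤ biasedMean q (trueIndicator (f e))) →
      ∃ a, andDist q (trueIndicator (f (edge i j hij))) a ≤ η ∧
        andDist q (trueIndicator (f (edge j k hjk))) a ≤ η ∧
        andDist q (trueIndicator (f (edge k i hki))) a ≤ η := by
  suffices hev : ∀ᶠ δ in 𝓝[>] (0 : ℝ), _ from
    (hev.and self_mem_nhdsWithin).exists.imp fun _ h => ⟨h.2, h.1⟩
  simp only [Filter.eventually_all]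
  intro i j k hij hjk hki
  obtain ⟨W, rfl, hW⟩ := exists_tripleWeights_base_eq hμ hsupp hq hij hjk hki
  obtain ⟨δ₀, hδ₀, hclose⟩ := W.exists_andDist_le hε hη
  filter_upwards [Ioc_mem_nhdsGT hδ₀] with δ hδ p f hpoly hmean
  exact hclose p _ _ _ (trueIndicator_mem_Icc _) (trueIndicator_mem_Icc _)
    (trueIndicator_mem_Icc _) (hmean _) (hmean _)
    ((W.defect_edge_le hμ hij hjk hki hW f).trans (by linarith [hδ.2]))

theorem exists_forall_andDist_edge_le {m : ℕ} (hm : 3 ≤ m) {p : ℕ}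
    (f : PairIdx m → (Fin p → Bool) → Bool) {q : ℝ} (hq : q ∈ Set.Icc 0 1) {ε η : ℝ}
    (hη : 2 * η < (1 - q) * (ε - η)) (hmean : ∀ e, ε ≤ biasedMean q (trueIndicator (f e)))
    (htri : ∀ i j k : Fin m, ∀ (hij : i ≠ j) (hjk : j ≠ k) (hki : k ≠ i),
      ∃ a, andDist q (trueIndicator (f (edge i j hij))) a ≤ η ∧
        andDist q (trueIndicator (f (edge j k hjk))) a ≤ η ∧
        andDist q (trueIndicator (f (edge k i hki))) a ≤ η) :
    ∃ a, ∀ e, andDist q (trueIndicator (f e)) a ≤ η := by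
  obtain ⟨a, ha⟩ := exists_forall_of_triangles (by rwa [Fintype.card_fin])
    (R := fun i j a => ∃ h : i ≠ j, andDist q (trueIndicator (f (edge i j h))) a ≤ η)
    (fun i j a ⟨h, ha⟩ => ⟨h.symm, by rwa [edge_comm]⟩)
    (fun i j a b ⟨h, ha⟩ ⟨_, hb⟩ => le_antisymm
      (le_of_andDist_le hq (hmean _) hb ha hη) (le_of_andDist_le hq (hmean _) ha hb hη))
    fun i j k hij hjk hki => (htri i j k hij hjk hki).imp fun _ ⟨ha, ha', ha''⟩ =>
      ⟨⟨hij, ha⟩, ⟨hjk, ha'⟩, ⟨hki, ha''⟩⟩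
  refine ⟨a, fun e => ?_⟩
  obtain ⟨_, he⟩ := ha _ _ e.2.ne
  rwa [edge_fst_snd] at he

theorem edge_prob_mem_Ioo {m : ℕ} (hm : 3 ≤ m) {μ : (PairIdx m → Bool) → ℝ}
    (hμ : μ ∈ stdSimplex ℝ (PairIdx m → Bool)) (hsupp : ∀ x, 0 < μ x ↔ IsEquivVec x) {q : ℝ}
    (hq : ∀ e, mapWeight (fun x => x e) μ true = q) : q ∈ Set.Ioo 0 1 := by
  obtain ⟨i, j, k, hij, hik, hjk⟩ := Fintype.two_lt_card_iff.1 (by rwa [Fintype.card_fin])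
  obtain ⟨W, rfl, -⟩ := exists_tripleWeights_base_eq hμ hsupp hq hij hjk hik.symm
  exact ⟨W.bernoulliWeight_pos true, sub_pos.1 (W.bernoulliWeight_pos false)⟩

theorem stmt17_general (m : ℕ) (hm : 3 ≤ m) (μ : (PairIdx m → Bool) → ℝ)
    (hnonneg : ∀ x, 0 ≤ μ x) (hsum : ∑ x : PairIdx m → Bool, μ x = 1)
    (hsupp : ∀ x : PairIdx m → Bool, 0 < μ x ↔ IsEquivVec x) (q : ℝ)
    (hq : ∀ e : PairIdx m, (∑ x : PairIdx m → Bool, if x e = true then μ x else 0) = q) :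
    ∀ ε > (0 : ℝ), ∃ δ > (0 : ℝ), ∀ p : ℕ, ∀ f : PairIdx m → (Fin p → Bool) → Bool,
      prodPr μ p (fun xs => IsEquivVec (fun e => f e (fun k => xs k e))) ≥ 1 - δ →
      (∀ e : PairIdx m, nuPr q p (fun y => f e y = false) < 1 - ε) →
      ∃ S : Finset (Fin p), ∀ e : PairIdx m,
        nuPr q p (fun y => f e y = decide (∀ s ∈ S, y s = true)) ≥ 1 - ε := by
  intro ε hε
  have hμ : μ ∈ stdSimplex ℝ (PairIdx m → Bool) := ⟨hnonneg, hsum⟩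
  replace hq (e) : mapWeight (fun x => x e) μ true = q := (sum_filter _ _).trans (hq e)
  obtain ⟨hq₀, hq₁⟩ := edge_prob_mem_Ioo hm hμ hsupp hq
  obtain ⟨η, hη, hηε, hηq⟩ : ∃ η > 0, η ≤ ε ∧ 2 * η < (1 - q) * (ε - η) :=
    ⟨ε * (1 - q) / 4, by nlinarith, by nlinarith, by nlinarith [mul_pos hε (sub_pos.2 hq₁)]⟩
  obtain ⟨δ, hδ, htri⟩ := exists_forall_triangle_andDist_edge_le hμ hsupp hq hε hη
  refine ⟨δ, hδ, fun p f hpoly hfar => ?_⟩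
  have hmean (e) : ε ≤ biasedMean q (trueIndicator (f e)) := by
    linarith [hfar e, nuPr_eq_false q (f e)]
  obtain ⟨a, ha⟩ := exists_forall_andDist_edge_le hm f ⟨hq₀.le, hq₁.le⟩ hηq hmean
    fun i j k hij hjk hki => htri i j k hij hjk hki p f hpoly hmean
  obtain ⟨S, rfl⟩ : ∃ S : Finset (Fin p), (fun s => decide (s ∈ S)) = a :=
    ⟨univ.filter fun s => a s = true, by simp⟩
  exact ⟨S, fun e => by linarith [ha e, nuPr_eq_decide_forall q (f e) S]⟩

/-- approximate aggregation of equivalence relations: approximate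
polymorphisms of `Equiv_m` which are far from constant `0` are close to a common
oligarchy (AND over a set `S` of voters). -/
theorem stmt17 (m : ℕ) (hm : 3 ≤ m)
    (μ : (PairIdx m → Bool) → ℝ)
    (hnonneg : ∀ x, 0 ≤ μ x)
    (hsum : ∑ x : PairIdx m → Bool, μ x = 1)
    (hsupp : ∀ x : PairIdx m → Bool, 0 < μ x ↔ IsEquivVec x)
    (hinv : ∀ σ : Equiv.Perm (Fin m), ∀ x : PairIdx m → Bool,
      μ (fun e => pget x (σ⁻¹ e.val.1) (σ⁻¹ e.val.2)) = μ x)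
    (q : ℝ)
    (hq : ∀ e : PairIdx m,
      (∑ x : PairIdx m → Bool, if x e = true then μ x else 0) = q) :
    ∃ ε₀ > (0 : ℝ), ∀ ε : ℝ, 0 < ε → ε < ε₀ → ∃ δ > (0 : ℝ), ∀ p : ℕ,
      ∀ f : PairIdx m → (Fin p → Bool) → Bool,
        prodPr μ p (fun xs => IsEquivVec (fun e => f e (fun k => xs k e))) ≥ 1 - δ →
        (∀ e : PairIdx m, nuPr q p (fun y => f e y = false) < 1 - ε) →
        ∃ S : Finset (Fin p), ∀ e : PairIdx m,
          nuPr q p (fun y => f e y = decide (∀ s ∈ S, y s = true)) ≥ 1 - ε :=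
  ⟨1, one_pos, fun ε hε _ => stmt17_general m hm μ hnonneg hsum hsupp q hq ε hε⟩
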